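/- arXiv:2309.07962 — 4 statements merged into one kernel-verified Lean document; each statement's English description precedes it below -/
import Mathlib

section
/- Let K be a field and let n ≥ 0. Then for every k ≥ 0 the weight-k component of the universal enveloping algebra U(K^n) satisfies: dim_K U(K^n)_0 = 1, dim_K U(K^n)_1 = 2n, dim_K U(K^n)_2 = (3n² − n)/2, and dim_K U(K^n)_k = 2·(n choose k) for all k ≥ 3. -/
/-!
Universal enveloping algebra of the abelian alternative algebra `K^n`.

`T = Tens_K(K^n ⊕ K^n)`; `l_a` (resp. `r_a`) is the image of `(a,0)` (resp. `(0,a)`).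
`U(K^n)` is the quotient of `T` by the two-sided ideal generated by
`l_a·l_a`, `r_a·r_a`, `l_b·l_a + r_a·r_b`, `r_b·l_a − l_a·r_b − r_a·r_b`.
-/

noncomputable section

/-- `l_a ∈ Tens_K(K^n ⊕ K^n)`. -/
def lT (K : Type) [CommRing K] (n : ℕ) (a : Fin n → K) :
    TensorAlgebra K ((Fin n → K) × (Fin n → K)) :=
  TensorAlgebra.ι K (a, 0)

/-- `r_a ∈ Tens_K(K^n ⊕ K^n)`. -/
def rT (K : Type) [CommRing K] (n : ℕ) (a : Fin n → K) :
    TensorAlgebra K ((Fin n → K) × (Fin n → K)) :=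
  TensorAlgebra.ι K (0, a)

/-- The relations defining `U(K^n)`: quotienting by this relation is the same as
quotienting by the two-sided ideal generated by the listed elements. -/
inductive URel (K : Type) [CommRing K] (n : ℕ) :
    TensorAlgebra K ((Fin n → K) × (Fin n → K)) →
    TensorAlgebra K ((Fin n → K) × (Fin n → K)) → Prop
  | ll (a : Fin n → K) : URel K n (lT K n a * lT K n a) 0
  | rr (a : Fin n → K) : URel K n (rT K n a * rT K n a) 0
  | llrr (a b : Fin n → K) : URel K n (lT K n b * lT K n a + rT K n a * rT K n b) 0
  | rl (a b : Fin n → K) :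
      URel K n (rT K n b * lT K n a - lT K n a * rT K n b - rT K n a * rT K n b) 0

/-- The universal enveloping algebra `U(K^n)`. -/
def Ualg (K : Type) [CommRing K] (n : ℕ) : Type := RingQuot (URel K n)

instance (K : Type) [CommRing K] (n : ℕ) : Ring (Ualg K n) :=
  inferInstanceAs (Ring (RingQuot (URel K n)))

instance (K : Type) [CommRing K] (n : ℕ) : Algebra K (Ualg K n) :=
  inferInstanceAs (Algebra K (RingQuot (URel K n)))

/-- Image of `l_a` in `U(K^n)`. -/
def lU (K : Type) [CommRing K] (n : ℕ) (a : Fin n → K) : Ualg K n :=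
  RingQuot.mkAlgHom K (URel K n) (lT K n a)

/-- Image of `r_a` in `U(K^n)`. -/
def rU (K : Type) [CommRing K] (n : ℕ) (a : Fin n → K) : Ualg K n :=
  RingQuot.mkAlgHom K (URel K n) (rT K n a)

/-- The weight-one part `V ⊆ U(K^n)`: the span of all `l_a` and `r_a`. -/
def V (K : Type) [CommRing K] (n : ℕ) : Submodule K (Ualg K n) :=
  Submodule.span K (Set.range (lU K n) ∪ Set.range (rU K n))

namespace UAux

open scoped TensorProduct

section
variable (K : Type) [Field K] (n : ℕ)

def mkU : TensorAlgebra K ((Fin n → K) × (Fin n → K)) →ₐ[K] Ualg K n :=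
  RingQuot.mkAlgHom K (URel K n)

def lL : (Fin n → K) →ₗ[K] Ualg K n :=
  (mkU K n).toLinearMap ∘ₗ TensorAlgebra.ι K ∘ₗ LinearMap.inl K _ _

def rL : (Fin n → K) →ₗ[K] Ualg K n :=
  (mkU K n).toLinearMap ∘ₗ TensorAlgebra.ι K ∘ₗ LinearMap.inr K _ _

theorem lL_eq (a) : lL K n a = lU K n a := rfl
theorem rL_eq (a) : rL K n a = rU K n a := rfl
theorem mkU_l (a) : mkU K n (lT K n a) = lL K n a := rfl
theorem mkU_r (a) : mkU K n (rT K n a) = rL K n a := rfl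

theorem mkU_rel {x y} (h : URel K n x y) : mkU K n x = mkU K n y :=
  RingQuot.mkAlgHom_rel K h

theorem ll (a) : lL K n a * lL K n a = 0 := by
  simpa only [map_mul, mkU_l, map_zero] using mkU_rel K n (URel.ll a)
theorem rr (a) : rL K n a * rL K n a = 0 := by
  simpa only [map_mul, mkU_r, map_zero] using mkU_rel K n (URel.rr a)
theorem llrr (a b) : lL K n b * lL K n a + rL K n a * rL K n b = 0 := by
  simpa only [map_mul, map_add, mkU_l, mkU_r, map_zero] using mkU_rel K n (URel.llrr a b)
theorem rl (a b) : rL K n b * lL K n a = lL K n a * rL K n b + rL K n a * rL K n b := by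
  have := mkU_rel K n (URel.rl a b)
  simp only [map_mul, map_sub, mkU_l, mkU_r, map_zero] at this
  rw [sub_sub, sub_eq_zero] at this
  exact this

theorem ll_anti (a b) : lL K n a * lL K n b = - (lL K n b * lL K n a) := by
  have h := ll K n (a + b)
  simp only [map_add, add_mul, mul_add, ll, zero_add, add_zero] at h
  exact eq_neg_of_add_eq_zero_right h

theorem ll_eq_rr (a b) : lL K n a * lL K n b = rL K n a * rL K n b := by
  have h := llrr K n a b
  rw [ll_anti K n b a] at h
  exact (neg_add_eq_zero.mp h)

/-- Universal property. -/
def liftU {A : Type} [Ring A] [Algebra K A] (l r : (Fin n → K) →ₗ[K] A)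
    (h1 : ∀ a, l a * l a = 0) (h2 : ∀ a, r a * r a = 0)
    (h3 : ∀ a b, l b * l a + r a * r b = 0)
    (h4 : ∀ a b, r b * l a - l a * r b - r a * r b = 0) : Ualg K n →ₐ[K] A :=
  RingQuot.liftAlgHom K (s := URel K n) ⟨TensorAlgebra.lift K (l.coprod r), by
    intro x y h
    cases h with
    | ll a => simpa [lT] using h1 a
    | rr a => simpa [rT] using h2 a
    | llrr a b => simpa [lT, rT] using h3 a b
    | rl a b => simpa [lT, rT] using h4 a b⟩

section
variable {A : Type} [Ring A] [Algebra K A] (l r : (Fin n → K) →ₗ[K] A)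
    (h1 : ∀ a, l a * l a = 0) (h2 : ∀ a, r a * r a = 0)
    (h3 : ∀ a b, l b * l a + r a * r b = 0)
    (h4 : ∀ a b, r b * l a - l a * r b - r a * r b = 0)

theorem liftU_l (a) : liftU K n l r h1 h2 h3 h4 (lL K n a) = l a := by
  have := RingQuot.liftAlgHom_mkAlgHom_apply K (TensorAlgebra.lift K (l.coprod r))
    (s := URel K n) (by
    intro x y h
    cases h with
    | ll a => simpa [lT] using h1 a
    | rr a => simpa [rT] using h2 a
    | llrr a b => simpa [lT, rT] using h3 a b
    | rl a b => simpa [lT, rT] using h4 a b) (TensorAlgebra.ι K (a, 0))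
  refine Eq.trans this ?_
  simp

theorem liftU_r (a) : liftU K n l r h1 h2 h3 h4 (rL K n a) = r a := by
  have := RingQuot.liftAlgHom_mkAlgHom_apply K (TensorAlgebra.lift K (l.coprod r))
    (s := URel K n) (by
    intro x y h
    cases h with
    | ll a => simpa [lT] using h1 a
    | rr a => simpa [rT] using h2 a
    | llrr a b => simpa [lT, rT] using h3 a b
    | rl a b => simpa [lT, rT] using h4 a b) (TensorAlgebra.ι K (0, a))
  refine Eq.trans this ?_
  simp
end

abbrev E := ExteriorAlgebra K (Fin n → K)

/-- left multiplication by `a` on the exterior algebra -/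
def w : (Fin n → K) →ₗ[K] Module.End K (E K n) :=
  (LinearMap.mul K (E K n)) ∘ₗ ExteriorAlgebra.ι K

theorem w_apply (a x) : w K n a x = ExteriorAlgebra.ι K a * x := rfl

theorem w_w (a x) : w K n a (w K n a x) = 0 := by
  rw [w_apply, w_apply, ← mul_assoc, ExteriorAlgebra.ι_sq_zero, zero_mul]

theorem w_anti (a b x) : w K n a (w K n b x) = - w K n b (w K n a x) := by
  have h := w_w K n (a + b) x
  simp only [map_add, LinearMap.add_apply, w_w, zero_add, add_zero] at h
  exact eq_neg_of_add_eq_zero_right h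

def l1 : (Fin n → K) →ₗ[K] Module.End K (E K n × E K n) where
  toFun a := ((w K n a) ∘ₗ LinearMap.snd K _ _).prod ((w K n a) ∘ₗ LinearMap.fst K _ _)
  map_add' a b := by ext <;> simp
  map_smul' c a := by ext <;> simp

def r1 : (Fin n → K) →ₗ[K] Module.End K (E K n × E K n) where
  toFun a := ((w K n a) ∘ₗ (LinearMap.fst K _ _ - LinearMap.snd K _ _)).prod
    (-((w K n a) ∘ₗ LinearMap.snd K _ _))
  map_add' a b := by
    apply LinearMap.ext; intro x
    ext <;> simp <;> abel
  map_smul' c a := by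
    apply LinearMap.ext; intro x
    ext <;> simp [smul_sub]

theorem l1_apply (a x) : l1 K n a x = (w K n a x.2, w K n a x.1) := rfl
theorem r1_apply (a x) : r1 K n a x = (w K n a (x.1 - x.2), - w K n a x.2) := rfl

def rep1 : Ualg K n →ₐ[K] Module.End K (E K n × E K n) :=
  liftU K n (l1 K n) (r1 K n)
    (fun a => by
      apply LinearMap.ext; intro x
      simp [Module.End.mul_apply, l1_apply, w_w])
    (fun a => by
      apply LinearMap.ext; intro x
      simp [Module.End.mul_apply, r1_apply, w_w])
    (fun a b => by
      apply LinearMap.ext; intro x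
      simp only [Module.End.mul_apply, l1_apply, r1_apply, LinearMap.add_apply, map_sub, map_neg,
        w_anti K n b a, LinearMap.zero_apply]
      ext <;> simp)
    (fun a b => by
      apply LinearMap.ext; intro x
      simp only [Module.End.mul_apply, l1_apply, r1_apply, LinearMap.sub_apply, map_sub, map_neg,
        w_anti K n b a, LinearMap.zero_apply]
      ext <;> simp)

def ev1 : Ualg K n →ₗ[K] E K n × E K n :=
  (LinearMap.applyₗ ((1, 0) : E K n × E K n)) ∘ₗ (rep1 K n).toLinearMap

theorem ev1_one : ev1 K n 1 = (1, 0) := by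
  simp [ev1]

theorem ev1_l (a u) : ev1 K n (lL K n a * u) = l1 K n a (ev1 K n u) := by
  simp [ev1, rep1, liftU_l]

theorem ev1_r (a u) : ev1 K n (rL K n a * u) = r1 K n a (ev1 K n u) := by
  simp [ev1, rep1, liftU_r]

abbrev N2 := K × (Fin n → K) × (Fin n → K) × ((Fin n → K) ⊗[K] (Fin n → K))

def l2 : (Fin n → K) →ₗ[K] Module.End K (N2 K n) :=
  LinearMap.mk₂ K (fun a x => (0, x.1 • a, 0, a ⊗ₜ x.2.2.1))
    (fun a b x => by simp [TensorProduct.add_tmul])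
    (fun c a x => by simp [TensorProduct.smul_tmul', smul_comm c])
    (fun a x y => by simp [TensorProduct.tmul_add, add_smul])
    (fun c a x => by simp [mul_smul])

def r2 : (Fin n → K) →ₗ[K] Module.End K (N2 K n) :=
  LinearMap.mk₂ K (fun a x => (0, 0, x.1 • a, x.2.1 ⊗ₜ a))
    (fun a b x => by simp [TensorProduct.tmul_add])
    (fun c a x => by simp [smul_comm c])
    (fun a x y => by simp [TensorProduct.add_tmul, add_smul])
    (fun c a x => by simp [mul_smul, TensorProduct.smul_tmul'])

theorem l2_apply (a x) : l2 K n a x = (0, x.1 • a, 0, a ⊗ₜ x.2.2.1) := rfl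
theorem r2_apply (a x) : r2 K n a x = (0, 0, x.1 • a, x.2.1 ⊗ₜ a) := rfl

def rep2 : Ualg K n →ₐ[K] Module.End K (N2 K n) :=
  liftU K n (A := Module.End K (N2 K n)) (l2 K n) (r2 K n)
    (fun a => by
      apply LinearMap.ext; intro x
      simp [Module.End.mul_apply, l2_apply])
    (fun a => by
      apply LinearMap.ext; intro x
      simp [Module.End.mul_apply, r2_apply])
    (fun a b => by
      apply LinearMap.ext; intro x
      simp [Module.End.mul_apply, l2_apply, r2_apply])
    (fun a b => by
      apply LinearMap.ext; intro x
      simp [Module.End.mul_apply, l2_apply, r2_apply, TensorProduct.smul_tmul'])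

def ev2 : Ualg K n →ₗ[K] N2 K n :=
  (LinearMap.applyₗ ((1, 0, 0, 0) : N2 K n)) ∘ₗ (rep2 K n).toLinearMap

theorem ev2_lr (a b) : ev2 K n (lL K n a * rL K n b) = (0, 0, 0, a ⊗ₜ b) := by
  simp [ev2, rep2, liftU_l, liftU_r, l2_apply, r2_apply]

theorem ev2_rr (a b) : ev2 K n (rL K n a * rL K n b) = 0 := by
  simp [ev2, rep2, liftU_r, r2_apply]

/-- The map from the exterior algebra. -/
def phi : E K n →ₐ[K] Ualg K n := ExteriorAlgebra.lift K ⟨rL K n, rr K n⟩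

theorem phi_ι (a) : phi K n (ExteriorAlgebra.ι K a) = rL K n a :=
  ExteriorAlgebra.lift_ι_apply K _ _ _

theorem ev1_phi_mul (x u : E K n) (h : ev1 K n (phi K n u) = (u, 0)) :
    ev1 K n (phi K n (x * u)) = (x * u, 0) := by
  induction x using ExteriorAlgebra.induction generalizing u with
  | algebraMap c =>
    rw [← Algebra.smul_def, map_smul, map_smul, h]; simp
  | ι a => rw [map_mul, phi_ι, ev1_r, h, r1_apply]; simp [w_apply]
  | mul x y hx hy =>
    rw [mul_assoc]
    exact hx _ (hy _ h)
  | add x y hx hy =>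
    rw [add_mul, map_add, map_add, hx _ h, hy _ h]; simp

theorem ev1_phi (x : E K n) : ev1 K n (phi K n x) = (x, 0) := by
  have := ev1_phi_mul K n x 1 (by rw [map_one, ev1_one])
  rwa [mul_one] at this

def P : Submodule K (Ualg K n) := LinearMap.range (lL K n)
def Q : Submodule K (Ualg K n) := LinearMap.range (rL K n)

theorem V_eq : V K n = P K n ⊔ Q K n := by
  rw [V, Submodule.span_union]
  congr 1
  · exact (Submodule.span_eq (P K n))
  · exact (Submodule.span_eq (Q K n))

theorem PP_le : P K n * P K n ≤ Q K n * Q K n := by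
  rw [Submodule.mul_le]
  rintro _ ⟨a, rfl⟩ _ ⟨b, rfl⟩
  rw [ll_eq_rr]
  exact Submodule.mul_mem_mul ⟨a, rfl⟩ ⟨b, rfl⟩

theorem QP_le : Q K n * P K n ≤ P K n * Q K n ⊔ Q K n * Q K n := by
  rw [Submodule.mul_le]
  rintro _ ⟨b, rfl⟩ _ ⟨a, rfl⟩
  rw [rl]
  exact Submodule.add_mem_sup (Submodule.mul_mem_mul ⟨a, rfl⟩ ⟨b, rfl⟩)
    (Submodule.mul_mem_mul ⟨a, rfl⟩ ⟨b, rfl⟩)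

theorem V_pow (k : ℕ) : V K n ^ (k + 1) = P K n * Q K n ^ k ⊔ Q K n ^ (k + 1) := by
  induction k with
  | zero => simp [V_eq]
  | succ k ih =>
    rw [pow_succ', ih, V_eq]
    apply le_antisymm
    · rw [Submodule.sup_mul, Submodule.mul_sup, Submodule.mul_sup]
      refine sup_le (sup_le ?_ ?_) (sup_le ?_ ?_)
      · refine le_trans ?_ le_sup_right
        rw [← mul_assoc, pow_succ', pow_succ', ← mul_assoc]
        exact mul_le_mul' (PP_le K n) le_rfl
      · exact le_sup_left
      · rw [← mul_assoc]
        refine (mul_le_mul' (QP_le K n) le_rfl).trans ?_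
        rw [Submodule.sup_mul, mul_assoc, mul_assoc, ← pow_succ', ← pow_succ']
      · rw [← pow_succ']
        exact le_sup_right
    · refine sup_le ?_ ?_
      · exact mul_le_mul' le_sup_left le_sup_right
      · rw [pow_succ']
        exact mul_le_mul' le_sup_right le_sup_right

theorem Q_pow (k : ℕ) : Q K n ^ k = (⋀[K]^k (Fin n → K)).map (phi K n).toLinearMap := by
  have : Q K n = (LinearMap.range (ExteriorAlgebra.ι K (M := Fin n → K))).map
      (phi K n).toLinearMap := by
    rw [Q, ← LinearMap.range_comp]
    congr 1
    ext a
    simp [phi_ι]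
  rw [this, ← Submodule.map_pow]

/-- `Λ^k → U` through `phi`. -/
def phik (k : ℕ) : (⋀[K]^k (Fin n → K)) →ₗ[K] Ualg K n :=
  (phi K n).toLinearMap ∘ₗ Submodule.subtype _

theorem range_phik (k : ℕ) : LinearMap.range (phik K n k) = Q K n ^ k := by
  rw [Q_pow, phik, LinearMap.range_comp, Submodule.range_subtype]

theorem ev1_phik (k x) : ev1 K n (phik K n k x) = ((x : E K n), 0) := ev1_phi K n _

theorem Q_pow_span (k : ℕ) : Q K n ^ k =
    Submodule.span K (Set.range fun v : Fin k → (Fin n → K) =>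
      phi K n (ExteriorAlgebra.ιMulti K k v)) := by
  rw [Q_pow, ← ExteriorAlgebra.ιMulti_span_fixedDegree, Submodule.map_span, ← Set.range_comp]
  rfl

def Mmul (k : ℕ) : MultilinearMap K (fun _ : Fin (k + 1) => (Fin n → K)) (Ualg K n) :=
  LinearMap.uncurryLeft
    { toFun := fun a => (LinearMap.mulLeft K (lL K n a) ∘ₗ (phi K n).toLinearMap).compMultilinearMap
        (ExteriorAlgebra.ιMulti K k).toMultilinearMap
      map_add' := fun a b => by ext; simp [add_mul]
      map_smul' := fun c a => by ext; simp }

theorem Mmul_apply (k v) : Mmul K n k v =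
    lL K n (v 0) * phi K n (ExteriorAlgebra.ιMulti K k (Fin.tail v)) := rfl

theorem Mmul_cons (k a v) : Mmul K n k (Fin.cons a v) =
    lL K n a * phi K n (ExteriorAlgebra.ιMulti K k v) := rfl

theorem Mmul_cons3 (k a b c v) : Mmul K n (k + 2) (Fin.cons a (Fin.cons b (Fin.cons c v))) =
    lL K n a * lL K n b * lL K n c * phi K n (ExteriorAlgebra.ιMulti K k v) := by
  rw [Mmul_cons, ExteriorAlgebra.ιMulti_succ_apply, ExteriorAlgebra.ιMulti_succ_apply]
  rw [map_mul, map_mul, phi_ι, phi_ι, mul_assoc (lL K n a), ll_eq_rr]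
  simp only [mul_assoc]
  rfl


theorem Mmul_zero_of_tail (k a v) (h : ¬ Function.Injective v) :
    Mmul K n k (Fin.cons a v) = 0 := by
  rw [Mmul_cons, ExteriorAlgebra.ιMulti_eq_zero_of_not_inj h, map_zero, mul_zero]

theorem Mmul_swap (k a b c v) : Mmul K n (k + 2) (Fin.cons a (Fin.cons b (Fin.cons c v))) =
    - Mmul K n (k + 2) (Fin.cons b (Fin.cons a (Fin.cons c v))) := by
  rw [Mmul_cons3, Mmul_cons3, ll_anti K n a b]
  simp only [neg_mul]

theorem Mmul_alt (k) (a b c : Fin n → K) (v : Fin k → (Fin n → K))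
    (h : ¬ Function.Injective (Fin.cons a (Fin.cons b (Fin.cons c v)) : Fin (k + 3) → (Fin n → K))) :
    Mmul K n (k + 2) (Fin.cons a (Fin.cons b (Fin.cons c v))) = 0 := by
  by_cases h1 : Function.Injective (Fin.cons b (Fin.cons c v) : Fin (k + 2) → (Fin n → K))
  swap
  · exact Mmul_zero_of_tail K n _ _ _ h1
  by_cases h2 : Function.Injective (Fin.cons a (Fin.cons c v) : Fin (k + 2) → (Fin n → K))
  swap
  · rw [Mmul_swap, Mmul_zero_of_tail K n _ _ _ h2, neg_zero]
  by_cases hab : a = b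
  · subst hab
    rw [Mmul_cons3, ll, zero_mul, zero_mul]
  exfalso
  apply h
  rw [Fin.cons_injective_iff] at h2 ⊢
  refine ⟨?_, h1⟩
  rw [Fin.range_cons]
  rintro (h3 | h3)
  · exact hab h3
  · exact h2.1 h3

def Malt (k : ℕ) : (Fin n → K) [⋀^Fin (k + 3)]→ₗ[K] Ualg K n :=
  { Mmul K n (k + 2) with
    map_eq_zero_of_eq' := by
      intro v i j hij hne
      have hv : v = Fin.cons (v 0) (Fin.cons (Fin.tail v 0)
          (Fin.cons (Fin.tail (Fin.tail v) 0) (Fin.tail (Fin.tail (Fin.tail v))))) := by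
        simp only [Fin.cons_self_tail]
      have hinj : ¬ Function.Injective v := fun h => hne (h hij)
      rw [hv] at hinj
      have := Mmul_alt K n k _ _ _ _ hinj
      rw [← hv] at this
      exact this }

theorem Malt_apply (k v) : Malt K n k v =
    lL K n (v 0) * phi K n (ExteriorAlgebra.ιMulti K (k + 2) (Fin.tail v)) := rfl

def psi (k : ℕ) : (⋀[K]^(k + 3) (Fin n → K)) →ₗ[K] Ualg K n :=
  exteriorPower.alternatingMapLinearEquiv (Malt K n k)

theorem range_psi (k : ℕ) : LinearMap.range (psi K n k) = P K n * Q K n ^ (k + 2) := by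
  have hP : P K n = Submodule.span K (Set.range (lL K n)) := (Submodule.span_eq (P K n)).symm
  rw [Q_pow_span, hP, Submodule.span_mul_span, LinearMap.range_eq_map, ← exteriorPower.ιMulti_span,
    Submodule.map_span, ← Set.range_comp]
  congr 1
  ext x
  constructor
  · rintro ⟨v, rfl⟩
    refine Set.mem_mul.2 ⟨_, ⟨v 0, rfl⟩, _, ⟨Fin.tail v, rfl⟩, ?_⟩
    simp [psi, Malt_apply]
  · intro h
    obtain ⟨_, ⟨a, rfl⟩, _, ⟨v, rfl⟩, rfl⟩ := Set.mem_mul.1 h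
    refine ⟨(Fin.cons a v : Fin (k + 3) → (Fin n → K)), ?_⟩
    simp [psi, Malt_apply]

theorem ev1_psi (k x) : ev1 K n (psi K n k x) = (0, (x : E K n)) := by
  have : ev1 K n ∘ₗ psi K n k = LinearMap.inr K (E K n) (E K n) ∘ₗ Submodule.subtype _ := by
    apply exteriorPower.linearMap_ext
    ext1 v
    simp only [LinearMap.compAlternatingMap_apply, LinearMap.comp_apply, psi,
      exteriorPower.alternatingMapLinearEquiv_apply_ιMulti, Malt_apply, ev1_l, ev1_phi, l1_apply,
      map_zero, Submodule.subtype_apply, exteriorPower.ιMulti_apply_coe, LinearMap.inr_apply,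
      ExteriorAlgebra.ιMulti_succ_apply, w_apply, mul_zero]
    rfl
  exact LinearMap.congr_fun this x

theorem dim3 (k : ℕ) : Module.finrank K ↥(V K n ^ (k + 3)) = 2 * n.choose (k + 3) := by
  rw [V_pow K n (k + 2), ← range_psi, ← range_phik, ← LinearMap.range_coprod,
    LinearMap.finrank_range_of_inj, Module.finrank_prod, exteriorPower.finrank_eq]
  · simp [two_mul]
  · rw [injective_iff_map_eq_zero]
    rintro ⟨x, y⟩ h
    have := congrArg (ev1 K n) h
    simp only [LinearMap.coprod_apply, map_add, ev1_psi, ev1_phik, map_zero] at this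
    simpa [Prod.ext_iff, and_comm] using this

theorem dim1 : Module.finrank K ↥(V K n ^ 1) = 2 * n := by
  rw [pow_one, V_eq, P, Q, ← LinearMap.range_coprod,
    LinearMap.finrank_range_of_inj, Module.finrank_prod]
  · simp [two_mul]
  · rw [injective_iff_map_eq_zero]
    rintro ⟨x, y⟩ h
    have := congrArg (ev1 K n) h
    rw [LinearMap.coprod_apply, map_add, ← mul_one (lL K n x), ← mul_one (rL K n y), ev1_l,
      ev1_r, ev1_one, l1_apply, r1_apply, map_zero] at this
    simpa [w_apply, and_comm] using this

theorem dim0 : Module.finrank K ↥(V K n ^ 0) = 1 := by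
  rw [pow_zero, Submodule.one_eq_span, finrank_span_singleton]
  intro h
  have := congrArg (ev1 K n) h
  rw [ev1_one, map_zero] at this
  simp at this

def lr : (Fin n → K) ⊗[K] (Fin n → K) →ₗ[K] Ualg K n :=
  TensorProduct.lift ((LinearMap.mul K (Ualg K n)).compl₁₂ (lL K n) (rL K n))

theorem lr_tmul (a b) : lr K n (a ⊗ₜ b) = lL K n a * rL K n b := by simp [lr]

theorem range_lr : LinearMap.range (lr K n) = P K n * Q K n := by
  have hP : P K n = Submodule.span K (Set.range (lL K n)) := (Submodule.span_eq (P K n)).symm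
  have hQ : Q K n = Submodule.span K (Set.range (rL K n)) := (Submodule.span_eq (Q K n)).symm
  rw [hP, hQ, Submodule.span_mul_span, LinearMap.range_eq_map, ← TensorProduct.span_tmul_eq_top,
    Submodule.map_span]
  congr 1
  ext x
  constructor
  · rintro ⟨_, ⟨a, b, rfl⟩, rfl⟩
    rw [lr_tmul]
    exact Set.mul_mem_mul ⟨a, rfl⟩ ⟨b, rfl⟩
  · intro h
    obtain ⟨_, ⟨a, rfl⟩, _, ⟨b, rfl⟩, rfl⟩ := Set.mem_mul.1 h
    exact ⟨_, ⟨a, b, rfl⟩, lr_tmul K n a b⟩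

theorem ev2_lr_apply (x) : ev2 K n (lr K n x) = (0, 0, 0, x) := by
  induction x with
  | zero => simp; rfl
  | tmul a b => rw [lr_tmul, ev2_lr]
  | add x y hx hy => rw [map_add, map_add, hx, hy]; simp

theorem ev2_phik (x) : ev2 K n (phik K n 2 x) = 0 := by
  have : ev2 K n ∘ₗ phik K n 2 = 0 := by
    apply exteriorPower.linearMap_ext
    ext1 v
    simp [phik, ExteriorAlgebra.ιMulti_succ_apply, phi_ι, ev2_rr]
  exact LinearMap.congr_fun this x

theorem dim2 : Module.finrank K ↥(V K n ^ 2) = (3 * n ^ 2 - n) / 2 := by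
  have hV : V K n ^ 2 = P K n * Q K n ⊔ Q K n ^ 2 := by simpa using V_pow K n 1
  rw [hV, ← range_lr, ← range_phik, ← LinearMap.range_coprod,
    LinearMap.finrank_range_of_inj, Module.finrank_prod, exteriorPower.finrank_eq,
    Module.finrank_tensorProduct]
  · rw [Module.finrank_fin_fun, Nat.choose_two_right]
    have h2 := Nat.even_mul_pred_self n
    obtain ⟨m, hm⟩ := h2
    have h3 : n * (n - 1) + n = n ^ 2 := by
      cases n with
      | zero => rfl
      | succ n => simp; ring
    rw [hm] at h3 ⊢
    rw [← sq]
    omega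
  · rw [injective_iff_map_eq_zero]
    rintro ⟨x, y⟩ h
    have h2 := congrArg (ev2 K n) h
    simp only [LinearMap.coprod_apply, map_add, ev2_lr_apply, ev2_phik, map_zero] at h2
    have hx : x = 0 := by simpa [Prod.ext_iff] using h2
    subst hx
    have h1 := congrArg (ev1 K n) h
    simp only [LinearMap.coprod_apply, map_add, ev1_phik, map_zero] at h1
    simpa using h1

end
end UAux

/-- The weight-`k` component `U(K^n)_k` of the universal enveloping algebra of the
abelian alternative algebra `K^n` has dimension `1, 2n, (3n²−n)/2, 2·(n choose k)`
for `k = 0, 1, 2, k ≥ 3` respectively. -/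
theorem dim_weight_component (K : Type) [Field K] (n k : ℕ) :
    Module.finrank K ↥(V K n ^ k) =
      if k = 0 then 1
      else if k = 1 then 2 * n
      else if k = 2 then (3 * n ^ 2 - n) / 2
      else 2 * n.choose k := by
  match k with
  | 0 => simpa using UAux.dim0 K n
  | 1 => simpa using UAux.dim1 K n
  | 2 => simpa using UAux.dim2 K n
  | k + 3 => simpa using UAux.dim3 K n k

end
end

section
/- Let K be a field and n ≥ 0. Write e_1, …, e_n for the standard basis of K^n, and l_i = l_{e_i}, r_i = r_{e_i}. Then the images in U(K^n) of the following monomials form a K-vector-space basis of U(K^n): the element 1; the elements l_i and r_i for 1 ≤ i ≤ n; the elements r_i·l_i for 1 ≤ i ≤ n; the elements l_i·r_j, r_i·l_j, and r_i·r_j for 1 ≤ i < j ≤ n; and, for each k ≥ 3 and each strictly increasing sequence i_1 < i_2 < ⋯ < i_k in {1,…,n}, the two monomials r_{i_1}·r_{i_2}·⋯·r_{i_{k−1}}·r_{i_k} and r_{i_1}·r_{i_2}·⋯·r_{i_{k−1}}·l_{i_k}. -/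
/-!
Universal enveloping algebra of the abelian alternative algebra `K^n`.

`T = Tens_K(K^n ⊕ K^n)`; `l_a` (resp. `r_a`) is the image of `(a,0)` (resp. `(0,a)`).
`U(K^n)` is the quotient of `T` by the two-sided ideal generated by
`l_a·l_a`, `r_a·r_a`, `l_b·l_a + r_a·r_b`, `r_b·l_a − l_a·r_b − r_a·r_b`.
-/

noncomputable section

/-- The standard basis vector `e_i` of `K^n`. -/
def stdBasis (K : Type) [CommRing K] (n : ℕ) (i : Fin n) : Fin n → K :=
  Pi.single i 1

/-- Index type for the claimed basis of `U(K^n)`: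
* `one`: the element `1`;
* `gen i b`: `r_i` (if `b = true`) or `l_i` (if `b = false`), for `1 ≤ i ≤ n`;
* `rl i`: `r_i · l_i`, for `1 ≤ i ≤ n`;
* `two i j h t`: `l_i·r_j`, `r_i·l_j`, `r_i·r_j` (as `t = 0, 1, 2`) for `i < j`;
* `seq k hk f hf b`: for `k ≥ 3` and a strictly increasing sequence
  `f : Fin k → Fin n`, the monomial `r_{f 1} ⋯ r_{f (k-1)} · r_{f k}` (if `b = true`)
  or `r_{f 1} ⋯ r_{f (k-1)} · l_{f k}` (if `b = false`). -/
inductive BIdx (n : ℕ) : Type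
  | one : BIdx n
  | gen : Fin n → Bool → BIdx n
  | rl : Fin n → BIdx n
  | two : (i j : Fin n) → i < j → Fin 3 → BIdx n
  | seq : (k : ℕ) → 3 ≤ k → (f : Fin k → Fin n) → StrictMono f → Bool → BIdx n

/-- The element of `U(K^n)` indexed by `BIdx n`. -/
def basisElem (K : Type) [CommRing K] (n : ℕ) : BIdx n → Ualg K n
  | .one => 1
  | .gen i b => if b then rU K n (stdBasis K n i) else lU K n (stdBasis K n i)
  | .rl i => rU K n (stdBasis K n i) * lU K n (stdBasis K n i)
  | .two i j _ t =>
      if t = 0 then lU K n (stdBasis K n i) * rU K n (stdBasis K n j)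
      else if t = 1 then rU K n (stdBasis K n i) * lU K n (stdBasis K n j)
      else rU K n (stdBasis K n i) * rU K n (stdBasis K n j)
  | .seq k _ f _ b =>
      (List.ofFn fun t : Fin k =>
        if b = false ∧ t.val = k - 1 then lU K n (stdBasis K n (f t))
        else rU K n (stdBasis K n (f t))).prod

section helpers

variable {K : Type} [Field K] {n : ℕ}

def liftU {A : Type} [Ring A] [Algebra K A] (L R : (Fin n → K) →ₗ[K] A)
    (h1 : ∀ a, L a * L a = 0) (h2 : ∀ a, R a * R a = 0)
    (h3 : ∀ a b, L b * L a + R a * R b = 0)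
    (h4 : ∀ a b, R b * L a - L a * R b - R a * R b = 0) : Ualg K n →ₐ[K] A :=
  RingQuot.liftAlgHom K ⟨TensorAlgebra.lift K (L.coprod R), by
    intro x y h
    induction h with
    | ll a => simpa [lT, rT] using h1 a
    | rr a => simpa [lT, rT] using h2 a
    | llrr a b => simpa [lT, rT] using h3 a b
    | rl a b => simpa [lT, rT] using h4 a b⟩

theorem liftU_l {A : Type} [Ring A] [Algebra K A] (L R : (Fin n → K) →ₗ[K] A) (h1 h2 h3 h4)
    (a : Fin n → K) : liftU L R h1 h2 h3 h4 (lU K n a) = L a := by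
  unfold liftU lU
  refine (RingQuot.liftAlgHom_mkAlgHom_apply K _ _ _).trans ?_
  simp [lT]

theorem liftU_r {A : Type} [Ring A] [Algebra K A] (L R : (Fin n → K) →ₗ[K] A) (h1 h2 h3 h4)
    (a : Fin n → K) : liftU L R h1 h2 h3 h4 (rU K n a) = R a := by
  unfold liftU rU
  refine (RingQuot.liftAlgHom_mkAlgHom_apply K _ _ _).trans ?_
  simp [rT]

/-! ### the functionals `phi` -/

def du (K : Type) [Field K] : DualNumber (DualNumber K) := TrivSqZeroExt.inl DualNumber.eps
def dv (K : Type) [Field K] : DualNumber (DualNumber K) := DualNumber.eps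

theorem du_du : du K * du K = 0 := by
  simp [du, ← TrivSqZeroExt.inl_mul]
theorem dv_dv : dv K * dv K = 0 := by
  simp [dv]

abbrev aM (K : Type) [Field K] : K → DualNumber (DualNumber K) := algebraMap K _

def phiHom (p q : Fin n) : Ualg K n →ₐ[K] DualNumber (DualNumber K) :=
  liftU (LinearMap.mulRight K (du K) ∘ₗ Algebra.linearMap K _ ∘ₗ LinearMap.proj p)
    (LinearMap.mulRight K (dv K) ∘ₗ Algebra.linearMap K _ ∘ₗ LinearMap.proj q)
    (by intro a
        change aM K (a p) * du K * (aM K (a p) * du K) = 0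
        linear_combination (aM K (a p)) ^ 2 * du_du (K := K))
    (by intro a
        change aM K (a q) * dv K * (aM K (a q) * dv K) = 0
        linear_combination (aM K (a q)) ^ 2 * dv_dv (K := K))
    (by intro a b
        change aM K (b p) * du K * (aM K (a p) * du K) + aM K (a q) * dv K * (aM K (b q) * dv K) = 0
        linear_combination aM K (b p) * aM K (a p) * du_du (K := K)
          + aM K (a q) * aM K (b q) * dv_dv (K := K))
    (by intro a b
        change aM K (b q) * dv K * (aM K (a p) * du K) - aM K (a p) * du K * (aM K (b q) * dv K)
          - aM K (a q) * dv K * (aM K (b q) * dv K) = 0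
        linear_combination - aM K (a q) * aM K (b q) * dv_dv (K := K))

theorem phiHom_l (p q : Fin n) (a : Fin n → K) : phiHom p q (lU K n a) = aM K (a p) * du K := by
  rw [phiHom, liftU_l]; rfl
theorem phiHom_r (p q : Fin n) (a : Fin n → K) : phiHom p q (rU K n a) = aM K (a q) * dv K := by
  rw [phiHom, liftU_r]; rfl

def cof (K : Type) [Field K] : DualNumber (DualNumber K) →ₗ[K] K :=
  (TrivSqZeroExt.sndHom K K) ∘ₗ ((TrivSqZeroExt.sndHom (DualNumber K) (DualNumber K)).restrictScalars K)

theorem cof_one : cof K 1 = 0 := by simp [cof]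
theorem cof_u : cof K (du K) = 0 := by simp [cof, du]
theorem cof_v : cof K (dv K) = 0 := by simp [cof, dv]
theorem cof_uv : cof K (du K * dv K) = 1 := by simp [cof, du, dv]

theorem cof_aM (c : K) (x : DualNumber (DualNumber K)) : cof K (aM K c * x) = c * cof K x := by
  rw [aM, ← Algebra.smul_def, map_smul, smul_eq_mul]

def phi (p q : Fin n) : Ualg K n →ₗ[K] K := cof K ∘ₗ (phiHom p q).toLinearMap

/-! ### the matrix representation -/

abbrev Lam (K : Type) [Field K] (n : ℕ) := ExteriorAlgebra K (Fin n → K)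

def matL : (Fin n → K) →ₗ[K] Matrix (Fin 2) (Fin 2) (Lam K n) where
  toFun a := !![ExteriorAlgebra.ι K a, 0; -ExteriorAlgebra.ι K a, -ExteriorAlgebra.ι K a]
  map_add' a b := by
    ext i j; fin_cases i <;> fin_cases j <;> simp [add_comm]
  map_smul' a b := by
    ext i j; fin_cases i <;> fin_cases j <;> simp

def matR : (Fin n → K) →ₗ[K] Matrix (Fin 2) (Fin 2) (Lam K n) where
  toFun a := !![0, ExteriorAlgebra.ι K a; ExteriorAlgebra.ι K a, 0]
  map_add' a b := by
    ext i j; fin_cases i <;> fin_cases j <;> simp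
  map_smul' a b := by
    ext i j; fin_cases i <;> fin_cases j <;> simp

theorem iota_swap (a b : Fin n → K) : ExteriorAlgebra.ι K a * ExteriorAlgebra.ι K b =
    - (ExteriorAlgebra.ι K b * ExteriorAlgebra.ι K a) :=
  eq_neg_of_add_eq_zero_left (ExteriorAlgebra.ι_add_mul_swap a b)

def matHom : Ualg K n →ₐ[K] Matrix (Fin 2) (Fin 2) (Lam K n) :=
  liftU matL matR
    (by intro a; ext i j; fin_cases i <;> fin_cases j <;> simp [matL, Matrix.mul_apply])
    (by intro a; ext i j; fin_cases i <;> fin_cases j <;> simp [matR, Matrix.mul_apply])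
    (by intro a b; ext i j
        fin_cases i <;> fin_cases j <;> simp [matL, matR, iota_swap a b])
    (by intro a b; ext i j
        fin_cases i <;> fin_cases j <;> simp [matL, matR, iota_swap a b])

theorem matHom_l (a : Fin n → K) : matHom (lU K n a) = matL a := by
  simp [matHom, liftU_l]
theorem matHom_r (a : Fin n → K) : matHom (rU K n a) = matR a := by
  simp [matHom, liftU_r]

/-! ### the functionals on the exterior algebra -/

def minorA {k : ℕ} (f : Fin k → Fin n) : (Fin n → K) [⋀^Fin k]→ₗ[K] K :=
  Matrix.detRowAlternating.compLinearMap (LinearMap.funLeft K K f)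

def Dfun (K : Type) [Field K] {n : ℕ} (t : List (Fin n)) : Lam K n →ₗ[K] K :=
  ExteriorAlgebra.liftAlternating (fun m =>
    if h : m = t.length then h ▸ minorA t.get else 0)

def eL (K : Type) [Field K] {n : ℕ} (w : List (Fin n)) : Lam K n :=
  (w.map fun i => ExteriorAlgebra.ι K (stdBasis K n i)).prod

theorem eL_eq (w : List (Fin n)) :
    eL K w = ExteriorAlgebra.ιMulti K w.length (fun i => stdBasis K n (w.get i)) := by
  rw [ExteriorAlgebra.ιMulti_apply, eL]
  congr 1
  apply List.ext_getElem <;> simp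

theorem Dfun_ofLen (t w : List (Fin n)) (h : w.length ≠ t.length) : Dfun K t (eL K w) = 0 := by
  rw [eL_eq, Dfun, ExteriorAlgebra.liftAlternating_apply_ιMulti]
  simp [h]

theorem Dfun_self (t : List (Fin n)) (ht : t.SortedLT) : Dfun K t (eL K t) = 1 := by
  rw [eL_eq, Dfun, ExteriorAlgebra.liftAlternating_apply_ιMulti]
  simp only [dite_true]
  change Matrix.det _ = 1
  rw [← Matrix.det_one (R := K) (n := Fin t.length)]
  congr 1
  ext i j
  simp [LinearMap.funLeft_apply, stdBasis, Pi.single_apply, Matrix.one_apply, ht.nodup.getElem_inj_iff, Fin.ext_iff, eq_comm]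

theorem Dfun_ne (t w : List (Fin n)) (ht : t.SortedLT) (hw : w.SortedLT) (h : w ≠ t) :
    Dfun K t (eL K w) = 0 := by
  by_cases hl : w.length = t.length
  swap
  · exact Dfun_ofLen _ _ hl
  have hx : ∃ x ∈ w, x ∉ t := by
    by_contra! hc
    have h1 : w.Subperm t := hw.nodup.subperm hc
    have h2 : w.Perm t := h1.perm_of_length_le hl.ge
    exact h (hw.eq_of_mem_iff ht fun a => h2.mem_iff)
  obtain ⟨x, hxw, hxt⟩ := hx
  obtain ⟨i, hi, rfl⟩ := List.getElem_of_mem hxw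
  rw [eL_eq, Dfun, ExteriorAlgebra.liftAlternating_apply_ιMulti]
  have key : ∀ (m : ℕ) (hm : m = t.length) (v : Fin m → Fin n → K) (i : Fin m),
      (∀ j, v i (t.get j) = 0) →
      (if h : m = t.length then h ▸ minorA (K := K) t.get else 0 : (Fin n → K) [⋀^Fin m]→ₗ[K] K) v
        = 0 := by
    rintro m rfl v i hv
    simp only [dite_true]
    exact Matrix.det_eq_zero_of_row_eq_zero i hv
  refine key _ hl _ ⟨i, hi⟩ ?_
  intro j
  simp only [stdBasis, List.get_eq_getElem]
  apply Pi.single_eq_of_ne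
  rintro h
  exact hxt (h ▸ List.getElem_mem _)

theorem Dfun_eL (t w : List (Fin n)) (ht : t.SortedLT) (hw : w.SortedLT) :
    Dfun K t (eL K w) = if t = w then 1 else 0 := by
  split_ifs with h
  · subst h; exact Dfun_self _ ht
  · exact Dfun_ne _ _ ht hw (Ne.symm h)

/-! ### relations in `U` -/

theorem U_rr (a : Fin n → K) : rU K n a * rU K n a = 0 := by
  have h := RingQuot.mkAlgHom_rel K (URel.rr (K := K) (n := n) a)
  rw [map_mul, map_zero] at h
  exact h

theorem U_llrr (a b : Fin n → K) : lU K n b * lU K n a + rU K n a * rU K n b = 0 := by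
  have h := RingQuot.mkAlgHom_rel K (URel.llrr (K := K) (n := n) a b)
  rw [map_add, map_mul, map_mul, map_zero] at h
  exact h

theorem U_rl (a b : Fin n → K) :
    rU K n b * lU K n a - lU K n a * rU K n b - rU K n a * rU K n b = 0 := by
  have h := RingQuot.mkAlgHom_rel K (URel.rl (K := K) (n := n) a b)
  rw [map_sub, map_sub, map_mul, map_mul, map_mul, map_zero] at h
  exact h

def rLin : (Fin n → K) →ₗ[K] Ualg K n :=
  (RingQuot.mkAlgHom K (URel K n)).toLinearMap ∘ₗ TensorAlgebra.ι K ∘ₗ LinearMap.inr K _ _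
def lLin : (Fin n → K) →ₗ[K] Ualg K n :=
  (RingQuot.mkAlgHom K (URel K n)).toLinearMap ∘ₗ TensorAlgebra.ι K ∘ₗ LinearMap.inl K _ _
theorem rLin_apply (a : Fin n → K) : rLin a = rU K n a := rfl
theorem lLin_apply (a : Fin n → K) : lLin a = lU K n a := rfl

theorem U_swap (a b : Fin n → K) : rU K n a * rU K n b = - (rU K n b * rU K n a) := by
  have h := U_rr (a + b)
  rw [← rLin_apply, map_add, rLin_apply, rLin_apply, add_mul, mul_add, mul_add, U_rr, U_rr] at h
  apply eq_neg_of_add_eq_zero_left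
  simpa using h

theorem U_ll (a b : Fin n → K) : lU K n a * lU K n b = rU K n a * rU K n b := by
  rw [eq_neg_of_add_eq_zero_left (U_llrr b a), U_swap b a, neg_neg]

/-- generators on the standard basis -/
def rr (K : Type) [Field K] {n : ℕ} (i : Fin n) : Ualg K n := rU K n (stdBasis K n i)
def ll (K : Type) [Field K] {n : ℕ} (i : Fin n) : Ualg K n := lU K n (stdBasis K n i)

theorem rr_self (i : Fin n) : rr K i * rr K i = 0 := U_rr _
theorem rr_swap (i j : Fin n) : rr K i * rr K j = - (rr K j * rr K i) := U_swap _ _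
theorem ll_ll (i j : Fin n) : ll K i * ll K j = rr K i * rr K j := U_ll _ _
theorem ll_rr (i j : Fin n) : ll K i * rr K j = rr K j * ll K i - rr K i * rr K j := by
  have h := U_rl (stdBasis K n i) (stdBasis K n j)
  change rr K j * ll K i - ll K i * rr K j - rr K i * rr K j = 0 at h
  rw [sub_sub, sub_eq_zero] at h
  rw [h]; abel

theorem rr_ll (i j : Fin n) : rr K j * ll K i = ll K i * rr K j + rr K i * rr K j := by
  rw [ll_rr]; abel

/-- `l` commutes with pairs of `r`. -/
theorem ll_rr_rr (a b c : Fin n) : ll K a * (rr K b * rr K c) = rr K b * rr K c * ll K a := by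
  rw [← mul_assoc, ll_rr, sub_mul, mul_assoc, ll_rr, mul_sub, ← mul_assoc, ← mul_assoc, 
    rr_swap a b]
  noncomm_ring

theorem cyc (a b c : Fin n) : rr K a * rr K b * ll K c = rr K c * rr K a * ll K b := by
  rw [← ll_rr_rr, ← ll_ll a b, ← mul_assoc, ll_ll c a]

theorem rrl_swap (a b c : Fin n) : rr K a * (rr K b * ll K c) = -(rr K a * (rr K c * ll K b)) := by
  rw [← mul_assoc, cyc, rr_swap c a]; noncomm_ring

theorem rrl_zero (a b : Fin n) : rr K a * (rr K b * ll K b) = 0 := by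
  rw [← mul_assoc, ← cyc, rr_self, zero_mul]

def RR (K : Type) [Field K] {n : ℕ} (w : List (Fin n)) : Ualg K n := (w.map (rr K)).prod

theorem RR_nil : RR K ([] : List (Fin n)) = 1 := rfl
theorem RR_cons (a : Fin n) (w) : RR K (a :: w) = rr K a * RR K w := by simp [RR]
theorem RR_app (v w : List (Fin n)) : RR K (v ++ w) = RR K v * RR K w := by simp [RR]
theorem RR_single (a : Fin n) : RR K [a] = rr K a := by simp [RR]

theorem RR_perm {v w : List (Fin n)} (h : v.Perm w) : RR K v = RR K w ∨ RR K v = - RR K w := by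
  induction h with
  | nil => simp
  | cons x _ ih => rcases ih with ih | ih <;> simp [RR_cons, ih]
  | swap x y l =>
    right; rw [RR_cons, RR_cons, RR_cons, RR_cons, ← mul_assoc, rr_swap]; simp [mul_assoc]
  | trans _ _ h1 h2 => rcases h1 with h1 | h1 <;> rcases h2 with h2 | h2 <;> simp [h1, h2]

theorem RR_mem {a : Fin n} {w : List (Fin n)} (h : a ∈ w) : rr K a * RR K w = 0 := by
  rcases RR_perm (K := K) (List.perm_cons_erase h) with h | h <;> 
    simp [h, RR_cons, ← mul_assoc, rr_self]

theorem RR_dup {w : List (Fin n)} (h : ¬ w.Nodup) : RR K w = 0 := by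
  induction w with
  | nil => simp at h
  | cons a w ih =>
    rw [List.nodup_cons] at h
    rw [RR_cons]
    by_cases ha : a ∈ w
    · exact RR_mem ha
    · rw [ih (by tauto), mul_zero]

theorem perm_erase_app {a : Fin n} {w : List (Fin n)} (h : a ∈ w) :
    w.Perm (w.erase a ++ [a]) :=
  (List.perm_cons_erase h).trans (List.perm_append_singleton a _).symm

/-- prefix nonempty: swapping the last `r` with `l`. -/
theorem RRl_swap (w : List (Fin n)) (hw : w ≠ []) (b c : Fin n) :
    RR K w * (rr K b * ll K c) = - (RR K w * (rr K c * ll K b)) := by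
  rw [← List.dropLast_append_getLast hw, RR_app, RR_single, mul_assoc, rrl_swap]
  simp [mul_assoc]

theorem RRl_zero (w : List (Fin n)) (hw : w ≠ []) (b : Fin n) :
    RR K w * (rr K b * ll K b) = 0 := by
  rw [← List.dropLast_append_getLast hw, RR_app, RR_single, mul_assoc, rrl_zero]
  simp

theorem LL_perm {v w : List (Fin n)} {c d : Fin n} (hv : 2 ≤ v.length)
    (h : (v ++ [c]).Perm (w ++ [d])) :
    RR K v * ll K c = RR K w * ll K d ∨ RR K v * ll K c = - (RR K w * ll K d) := by
  by_cases hcd : c = d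
  · subst hcd
    have h' := (List.perm_append_right_iff [c]).1 h
    rcases RR_perm (K := K) h' with h | h <;> simp [h]
  have hd : d ∈ v := by
    have : d ∈ v ++ [c] := h.mem_iff.2 (by simp)
    simpa [Ne.symm hcd] using this
  set u := v.erase d with hu
  have h1 : v.Perm (u ++ [d]) := perm_erase_app hd
  have hlen : v.length = u.length + 1 := by simpa using h1.length_eq
  have hune : u ≠ [] := by
    rintro h; rw [h] at hlen; simp at hlen; omega
  have h2 : w.Perm (u ++ [c]) := by
    have e1 : ((u ++ [c]) ++ [d]).Perm (w ++ [d]) := by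
      refine List.Perm.trans ?_ h
      refine List.Perm.trans ?_ (h1.symm.append_right [c])
      rw [List.append_assoc, List.append_assoc]
      exact (List.Perm.swap _ _ _).append_left u
    exact ((List.perm_append_right_iff [d]).1 e1).symm
  have e := RRl_swap (K := K) u hune d c
  rcases RR_perm (K := K) h1 with h1 | h1 <;> rcases RR_perm (K := K) h2 with h2 | h2 <;>
    simp [h1, h2, RR_app, RR_single, mul_assoc, e]

theorem LL_mem {w : List (Fin n)} {c : Fin n} (hw : 2 ≤ w.length) (h : c ∈ w) :
    RR K w * ll K c = 0 := by
  have h1 := perm_erase_app h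
  have hlen : w.length = (w.erase c).length + 1 := by simpa using h1.length_eq
  have hune : w.erase c ≠ [] := by
    rintro h; rw [h] at hlen; simp at hlen; omega
  rcases RR_perm (K := K) h1 with h1 | h1 <;>
    simp [h1, RR_app, RR_single, mul_assoc, RRl_zero _ hune]

/-! ### span -/

def WW (K : Type) [Field K] (n : ℕ) : Submodule K (Ualg K n) :=
  Submodule.span K (Set.range (basisElem K n))

theorem mem_WW (i : BIdx n) : basisElem K n i ∈ WW K n := Submodule.subset_span ⟨i, rfl⟩

theorem basisElem_seq (k : ℕ) (hk : 3 ≤ k + 1) (f : Fin (k + 1) → Fin n) (hf : StrictMono f) (b : Bool) :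
    basisElem K n (.seq (k + 1) hk f hf b) =
      RR K (List.ofFn fun i : Fin k => f i.castSucc) *
        (if b then rr K (f (Fin.last k)) else ll K (f (Fin.last k))) := by
  simp only [basisElem]
  rw [List.ofFn_succ', List.concat_eq_append, List.prod_append, RR, List.map_ofFn]
  congr 1
  · congr 2
    funext i
    have : i.val ≠ k := i.isLt.ne
    simp [this, rr]
  · cases b <;> simp [rr, ll]

theorem sorted_exists (w : List (Fin n)) (hw : w.Nodup) :
    ∃ v : List (Fin n), v.SortedLT ∧ w.Perm v := by
  refine ⟨w.toFinset.sort, Finset.sortedLT_sort _, ?_⟩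
  rw [List.perm_ext_iff_of_nodup hw (Finset.sortedLT_sort _).nodup]
  simp

theorem sorted_mem (v : List (Fin n)) (c : Fin n) (hv : 2 ≤ v.length) (hs : (v ++ [c]).SortedLT)
    (b : Bool) : RR K v * (if b then rr K c else ll K c) ∈ WW K n := by
  obtain ⟨k, hk⟩ : ∃ k, v.length = k := ⟨_, rfl⟩
  have hlen : (v ++ [c]).length = k + 1 := by simp [hk]
  let f : Fin (k + 1) → Fin n := fun i => (v ++ [c]).get (i.cast hlen.symm)
  have hf : StrictMono f := fun i j hij => hs hij
  have := mem_WW (K := K) (.seq (k + 1) (by omega) f hf b)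
  rw [basisElem_seq] at this
  have e1 : (List.ofFn fun i : Fin k => f i.castSucc) = v := by
    apply List.ext_getElem
    · simp [hk]
    · intro i h1 h2
      simp [f, List.getElem_append, h2]
  have e2 : f (Fin.last k) = c := by
    simp [f, ← hk]
  rwa [e1, e2] at this

theorem neg_or {x y : Ualg K n} (h : x = y ∨ x = -y) (hy : y ∈ WW K n) : x ∈ WW K n := by
  rcases h with rfl | rfl
  · exact hy
  · exact neg_mem hy

theorem RR_WW (w : List (Fin n)) (hw : 3 ≤ w.length) : RR K w ∈ WW K n := by
  by_cases hd : w.Nodup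
  swap
  · rw [RR_dup hd]; exact zero_mem _
  obtain ⟨v, hs, hp⟩ := sorted_exists w hd
  refine neg_or (RR_perm hp) ?_
  have hl := hp.length_eq
  have hne : v ≠ [] := by rintro rfl; simp at hl; simp [hl] at hw
  rw [← List.dropLast_append_getLast hne] at hs ⊢
  have := sorted_mem (K := K) _ _ (by simp; omega) hs true
  rw [RR_app, RR_single]
  simpa using this

theorem LL_WW (w : List (Fin n)) (c : Fin n) (hw : 2 ≤ w.length) : RR K w * ll K c ∈ WW K n := by
  by_cases hd : w.Nodup
  swap
  · rw [RR_dup hd, zero_mul]; exact zero_mem _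
  by_cases hc : c ∈ w
  · rw [LL_mem hw hc]; exact zero_mem _
  obtain ⟨v, hs, hp⟩ := sorted_exists (w ++ [c]) (by
    rw [List.nodup_append]; simp [hd]; rintro a ha rfl; exact hc ha)
  have hl := hp.length_eq
  have hne : v ≠ [] := by rintro rfl; simp at hl
  rw [← List.dropLast_append_getLast hne] at hs hp
  refine neg_or (LL_perm hw hp) ?_
  simp at hl
  have := sorted_mem (K := K) _ _ (by simp; omega) hs false
  simpa using this

theorem even_comm (w : List (Fin n)) (hw : Even w.length) (a : Fin n) :
    ll K a * RR K w = RR K w * ll K a := by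
  match w, hw with
  | [], _ => simp [RR_nil]
  | [x], h => simp at h
  | x :: y :: w, h =>
    have ih := even_comm w (by simpa [Nat.even_add_one] using h) a
    rw [RR_cons, RR_cons, ← mul_assoc (rr K x), ← mul_assoc, ll_rr_rr, mul_assoc, ih]
    simp [mul_assoc]

theorem odd_comm (w : List (Fin n)) (hw : ¬ Even w.length) (a : Fin n) :
    ∃ v x, w.length = v.length + 1 ∧
    ll K a * RR K w = RR K w * ll K a - RR K (v ++ [a, x]) := by
  have hne : w ≠ [] := by rintro rfl; simp at hw
  refine ⟨w.dropLast, w.getLast hne, ?_, ?_⟩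
  · have := List.length_pos_iff.2 hne
    simp; omega
  · have hl : Even w.dropLast.length := by
      have := List.length_pos_iff.2 hne
      simp; rw [Nat.even_iff] at *; omega
    conv_lhs => rw [← List.dropLast_append_getLast hne]
    conv_rhs => enter [1]; rw [← List.dropLast_append_getLast hne]
    rw [RR_app, RR_app, RR_single, ← mul_assoc, even_comm _ hl, mul_assoc, ll_rr, RR_cons, RR_single]
    noncomm_ring

theorem l_RR (w : List (Fin n)) (hw : 2 ≤ w.length) (a : Fin n) :
    ll K a * RR K w ∈ WW K n := by
  by_cases he : Even w.length
  · rw [even_comm _ he]; exact LL_WW _ _ hw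
  · obtain ⟨v, x, h1, h2⟩ := odd_comm (K := K) w he a
    rw [h2]
    exact sub_mem (LL_WW _ _ hw) (RR_WW _ (by simp; omega))

theorem l_LL (w : List (Fin n)) (hw : 1 ≤ w.length) (a c : Fin n) :
    ll K a * (RR K w * ll K c) ∈ WW K n := by
  have h0 : RR K w * ll K a * ll K c ∈ WW K n := by
    have : RR K w * ll K a * ll K c = RR K (w ++ [a, c]) := by
      rw [mul_assoc, ll_ll, RR_app, RR_cons, RR_single]
    rw [this]
    exact RR_WW _ (by simp; omega)
  rw [← mul_assoc]
  by_cases he : Even w.length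
  · rw [even_comm _ he]; exact h0
  · obtain ⟨v, x, h1, h2⟩ := odd_comm (K := K) w he a
    rw [h2, sub_mul]
    exact sub_mem h0 (LL_WW _ _ (by simp))

theorem W_one : (1 : Ualg K n) ∈ WW K n := mem_WW (.one)
theorem W_r (i : Fin n) : rr K i ∈ WW K n := by
  simpa [basisElem, rr, ll] using mem_WW (K := K) (.gen i true)
theorem W_l (i : Fin n) : ll K i ∈ WW K n := by
  simpa [basisElem, rr, ll] using mem_WW (K := K) (.gen i false)
theorem W_rr (i j : Fin n) : rr K i * rr K j ∈ WW K n := by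
  rcases lt_trichotomy i j with h | rfl | h
  · simpa [basisElem, rr, ll] using mem_WW (K := K) (.two i j h 2)
  · rw [rr_self]; exact zero_mem _
  · rw [rr_swap]; apply neg_mem
    simpa [basisElem, rr, ll] using mem_WW (K := K) (.two j i h 2)
theorem W_lr' (i j : Fin n) (h : i < j) : ll K i * rr K j ∈ WW K n := by
  simpa [basisElem, rr, ll] using mem_WW (K := K) (.two i j h 0)
theorem W_rl (i j : Fin n) : rr K i * ll K j ∈ WW K n := by
  rcases lt_trichotomy i j with h | rfl | h
  · simpa [basisElem, rr, ll] using mem_WW (K := K) (.two i j h 1)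
  · simpa [basisElem, rr, ll] using mem_WW (K := K) (.rl i)
  · rw [rr_ll]; exact add_mem (W_lr' _ _ h) (W_rr _ _)
theorem W_lr (i j : Fin n) : ll K i * rr K j ∈ WW K n := by
  rw [ll_rr]; exact sub_mem (W_rl _ _) (W_rr _ _)

theorem W_rrr (i j k : Fin n) : rr K i * (rr K j * rr K k) ∈ WW K n := by
  simpa [RR] using RR_WW (K := K) [i, j, k] (by simp)
theorem W_rrl (i j k : Fin n) : rr K i * (rr K j * ll K k) ∈ WW K n := by
  simpa [RR, mul_assoc] using LL_WW (K := K) [i, j] k (by simp)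
theorem W_lrr (i j k : Fin n) : ll K i * (rr K j * rr K k) ∈ WW K n := by
  simpa [RR] using l_RR (K := K) [j, k] (by simp) i
theorem W_lrl (i j k : Fin n) : ll K i * (rr K j * ll K k) ∈ WW K n := by
  simpa [RR] using l_LL (K := K) [j] (by simp) i k

theorem r_basis (i : Fin n) (x : BIdx n) : rr K i * basisElem K n x ∈ WW K n := by
  match x with
  | .one => simpa [basisElem, rr, ll] using W_r i
  | .gen j true => simpa [basisElem, rr, ll] using W_rr i j
  | .gen j false => simpa [basisElem, rr, ll] using W_rl i j
  | .rl j => simpa [basisElem, rr, ll] using W_rrl i j j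
  | .two j k h 0 =>
    have : rr K i * (ll K j * rr K k) ∈ WW K n := by
      rw [ll_rr, mul_sub]; exact sub_mem (W_rrl _ _ _) (W_rrr _ _ _)
    simpa [basisElem, rr, ll] using this
  | .two j k h 1 => simpa [basisElem, rr, ll] using W_rrl i j k
  | .two j k h 2 => simpa [basisElem, rr, ll] using W_rrr i j k
  | .seq 0 hk f hf b => omega
  | .seq (k + 1) hk f hf true =>
    rw [basisElem_seq, ← mul_assoc, ← RR_cons]
    have := RR_WW (K := K) ((i :: List.ofFn fun i : Fin k => f i.castSucc) ++ [f (Fin.last k)]) (by simp; omega)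
    rw [RR_app, RR_single] at this
    simpa using this
  | .seq (k + 1) hk f hf false =>
    rw [basisElem_seq, ← mul_assoc, ← RR_cons]
    exact LL_WW _ _ (by simp; omega)

theorem l_basis (i : Fin n) (x : BIdx n) : ll K i * basisElem K n x ∈ WW K n := by
  match x with
  | .one => simpa [basisElem, rr, ll] using W_l i
  | .gen j true => simpa [basisElem, rr, ll] using W_lr i j
  | .gen j false =>
    have : ll K i * ll K j ∈ WW K n := by rw [ll_ll]; exact W_rr _ _
    simpa [basisElem, rr, ll] using this
  | .rl j => simpa [basisElem, rr, ll] using W_lrl i j j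
  | .two j k h 0 =>
    have : ll K i * (ll K j * rr K k) ∈ WW K n := by
      rw [← mul_assoc, ll_ll, mul_assoc]; exact W_rrr _ _ _
    simpa [basisElem, rr, ll] using this
  | .two j k h 1 => simpa [basisElem, rr, ll] using W_lrl i j k
  | .two j k h 2 => simpa [basisElem, rr, ll] using W_lrr i j k
  | .seq 0 hk f hf b => omega
  | .seq (k + 1) hk f hf true =>
    rw [basisElem_seq]
    have := l_RR (K := K) ((List.ofFn fun i : Fin k => f i.castSucc) ++ [f (Fin.last k)]) (by simp; omega) i
    rw [RR_app, RR_single] at this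
    simpa using this
  | .seq (k + 1) hk f hf false =>
    rw [basisElem_seq]
    exact l_LL _ (by simp; omega) _ _

theorem mul_closed (y : Ualg K n) (h : ∀ x : BIdx n, y * basisElem K n x ∈ WW K n) :
    ∀ w ∈ WW K n, y * w ∈ WW K n := by
  have : WW K n ≤ (WW K n).comap (LinearMap.mulLeft K y) := by
    refine Submodule.span_le.2 ?_
    rintro _ ⟨x, rfl⟩
    exact h x
  exact fun w hw => this hw

theorem lin_closed (f : (Fin n → K) →ₗ[K] Ualg K n)
    (h : ∀ i, ∀ w ∈ WW K n, f (stdBasis K n i) * w ∈ WW K n) (a : Fin n → K) :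
    ∀ w ∈ WW K n, f a * w ∈ WW K n := by
  intro w hw
  have ha : a = ∑ i, a i • stdBasis K n i := by
    funext j
    simp [stdBasis, Finset.sum_apply, Pi.single_apply]
  rw [ha, map_sum, Finset.sum_mul]
  refine sum_mem fun i _ => ?_
  rw [map_smul, smul_mul_assoc]
  exact Submodule.smul_mem _ _ (h i w hw)

theorem mk_closed (t : TensorAlgebra K ((Fin n → K) × (Fin n → K))) :
    ∀ w ∈ WW K n, (show Ualg K n from RingQuot.mkAlgHom K (URel K n) t) * w ∈ WW K n := by
  induction t using TensorAlgebra.induction with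
  | algebraMap c =>
    intro w hw
    have : (show Ualg K n from RingQuot.mkAlgHom K (URel K n) (algebraMap K _ c)) =
      algebraMap K (Ualg K n) c := (RingQuot.mkAlgHom K (URel K n)).commutes c
    rw [this, ← Algebra.smul_def]
    exact Submodule.smul_mem _ _ hw
  | ι x =>
    intro w hw
    obtain ⟨a, b⟩ := x
    have : (show Ualg K n from RingQuot.mkAlgHom K (URel K n) (TensorAlgebra.ι K (a, b))) =
      lLin a + rLin b := by
      have e : ((a, b) : (Fin n → K) × (Fin n → K)) = (a, 0) + (0, b) := by simp
      change RingQuot.mkAlgHom K (URel K n) (TensorAlgebra.ι K (a, b)) = _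
      rw [e, map_add, map_add]
      rfl
    rw [this, add_mul]
    exact add_mem (lin_closed lLin (fun i => mul_closed _ (l_basis i)) a w hw)
      (lin_closed rLin (fun i => mul_closed _ (r_basis i)) b w hw)
  | mul a b ha hb =>
    intro w hw
    have : (show Ualg K n from RingQuot.mkAlgHom K (URel K n) (a * b)) =
      (show Ualg K n from RingQuot.mkAlgHom K (URel K n) a) *
      (show Ualg K n from RingQuot.mkAlgHom K (URel K n) b) := map_mul _ _ _
    rw [this, mul_assoc]
    exact ha _ (hb _ hw)
  | add a b ha hb =>
    intro w hw
    have : (show Ualg K n from RingQuot.mkAlgHom K (URel K n) (a + b)) =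
      (show Ualg K n from RingQuot.mkAlgHom K (URel K n) a) +
      (show Ualg K n from RingQuot.mkAlgHom K (URel K n) b) := map_add _ _ _
    rw [this, add_mul]
    exact add_mem (ha _ hw) (hb _ hw)

theorem WW_top : WW K n = ⊤ := by
  rw [eq_top_iff]
  rintro x -
  obtain ⟨t, rfl⟩ := RingQuot.mkAlgHom_surjective K (URel K n) x
  have := mk_closed (K := K) t 1 W_one
  rw [mul_one] at this
  exact this

/-! ### linear independence -/

open scoped Fin.NatCast Fin.CommRing

abbrev io (K : Type) [Field K] {n : ℕ} (i : Fin n) : Lam K n :=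
  ExteriorAlgebra.ι K (stdBasis K n i)

theorem eL_app (w : List (Fin n)) (c : Fin n) : eL K (w ++ [c]) = eL K w * io K c := by
  simp [eL]

theorem mat_rr (i : Fin n) : matHom (rr K i) = !![0, io K i; io K i, 0] := by
  rw [rr, matHom_r]; rfl
theorem mat_ll (i : Fin n) : matHom (ll K i) = !![io K i, 0; -io K i, -io K i] := by
  rw [ll, matHom_l]; rfl

theorem mat_row (w : List (Fin n)) (y : Ualg K n) (p q : Fin 2) :
    matHom (RR K w * y) p q = eL K w * matHom y (p + (w.length : Fin 2)) q := by
  induction w generalizing p with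
  | nil => simp [RR_nil, eL]
  | cons a w ih =>
    have e : p + ((a :: w).length : Fin 2) = (p + 1) + (w.length : Fin 2) := by
      simp only [List.length_cons, Nat.cast_add, Nat.cast_one]; ring
    rw [RR_cons, mul_assoc, map_mul, mat_rr, Matrix.mul_apply, e]
    have : eL K (a :: w) = io K a * eL K w := by simp [eL]
    rw [this, mul_assoc, ← ih]
    fin_cases p <;> simp

def psi (K : Type) [Field K] {n : ℕ} (t : List (Fin n)) (b : Bool) : Ualg K n →ₗ[K] K :=
  Dfun K t ∘ₗ Matrix.entryLinearMap K (Lam K n) ((t.length - 1 : ℕ) : Fin 2) (if b then 1 else 0) ∘ₗ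
    matHom.toLinearMap

theorem psi_apply (t : List (Fin n)) (b : Bool) (x : Ualg K n) :
    psi K t b x = Dfun K t (matHom x ((t.length - 1 : ℕ) : Fin 2) (if b then 1 else 0)) := rfl

theorem last_entry (b : Bool) (c : Fin n) (p q : Fin 2) :
    matHom (if b then rr K c else ll K c) p q = 0 ∨
    matHom (if b then rr K c else ll K c) p q = io K c ∨
    matHom (if b then rr K c else ll K c) p q = - io K c := by
  cases b <;> fin_cases p <;> fin_cases q <;> simp [mat_rr, mat_ll]

theorem psi_word (t w : List (Fin n)) (c : Fin n) (b b' : Bool) (ht : t.SortedLT)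
    (hw : (w ++ [c]).SortedLT) :
    psi K t b (RR K w * if b' then rr K c else ll K c) =
      if t = w ++ [c] ∧ b = b' then 1 else 0 := by
  rw [psi_apply, mat_row]
  by_cases h : t = w ++ [c]
  · subst h
    have e : ((((w ++ [c]).length - 1 : ℕ) : Fin 2) + (w.length : Fin 2)) = 0 := by
      simp only [List.length_append, List.length_singleton, Nat.add_sub_cancel]
      generalize (w.length : Fin 2) = p
      fin_cases p <;> rfl
    rw [e]
    have := Dfun_self (K := K) (w ++ [c]) hw
    rw [eL_app] at this
    cases b <;> cases b' <;> simp [mat_rr, mat_ll, this]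
  · have := Dfun_ne (K := K) t (w ++ [c]) ht hw (Ne.symm h)
    rw [eL_app] at this
    rcases last_entry (K := K) b' c (((t.length - 1 : ℕ) : Fin 2) + (w.length : Fin 2))
      (if b then 1 else 0) with h' | h' | h' <;> rw [h'] <;> simp [this, h]

theorem psi_one (t : List (Fin n)) (b : Bool) (ht : t.SortedLT) :
    psi K t b (basisElem K n .one) = if t = [] ∧ b = false then 1 else 0 := by
  have h0 := Dfun_eL (K := K) t [] ht (by simp [List.sortedLT_iff_pairwise])
  simp only [eL, List.map_nil, List.prod_nil] at h0
  rw [psi_apply]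
  simp only [basisElem, map_one]
  by_cases h : t = []
  · subst h
    rw [if_pos rfl] at h0
    cases b
    · have e : (1 : Matrix (Fin 2) (Fin 2) (Lam K n)) ((([] : List (Fin n)).length - 1 : ℕ) : Fin 2)
          (if false = true then 1 else 0) = 1 := Matrix.one_apply_eq _
      rw [e, h0]; simp
    · simp
  · rw [Matrix.one_apply]
    split_ifs <;> simp_all

theorem psi_gen (t : List (Fin n)) (b b' : Bool) (i : Fin n) (ht : t.SortedLT) :
    psi K t b (basisElem K n (.gen i b')) = if t = [i] ∧ b = b' then 1 else 0 := by
  have := psi_word (K := K) t [] i b b' ht (by simp [List.sortedLT_iff_pairwise])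
  simpa [RR_nil, basisElem, rr, ll] using this

theorem psi_rl (t : List (Fin n)) (b : Bool) (i : Fin n) :
    psi K t b (basisElem K n (.rl i)) = 0 := by
  change psi K t b (rr K i * ll K i) = 0
  have : matHom (rr K i * ll K i) = 0 := by
    rw [map_mul, mat_rr, mat_ll]
    ext p q; fin_cases p <;> fin_cases q <;> simp
  rw [psi_apply, this]; simp

theorem psi_two0 (t : List (Fin n)) (b : Bool) (i j : Fin n) (h : i < j) (ht : t.SortedLT) :
    psi K t b (basisElem K n (.two i j h 0)) = if t = [i, j] then -1 else 0 := by
  change psi K t b (ll K i * rr K j) = _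
  have h0 := Dfun_eL (K := K) t [i, j] ht (by simp [List.sortedLT_iff_pairwise, h])
  simp only [eL, List.map_cons, List.map_nil, List.prod_nil, List.prod_cons, mul_one] at h0
  have : matHom (ll K i * rr K j) =
      !![0, io K i * io K j; -(io K i * io K j), -(io K i * io K j)] := by
    rw [map_mul, mat_rr, mat_ll]
    ext p q; fin_cases p <;> fin_cases q <;> simp
  rw [psi_apply, this]
  by_cases ht' : t = [i, j]
  · subst ht'
    cases b <;> simp [h0]
  · simp only [ht', if_false] at h0 ⊢
    generalize ((t.length - 1 : ℕ) : Fin 2) = p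
    cases b <;> fin_cases p <;> simp [h0]

theorem psi_two1 (t : List (Fin n)) (b : Bool) (i j : Fin n) (h : i < j) (ht : t.SortedLT) :
    psi K t b (basisElem K n (.two i j h 1)) = if t = [i, j] ∧ b = false then 1 else 0 := by
  have := psi_word (K := K) t [i] j b false ht (by simp [List.sortedLT_iff_pairwise, h])
  simpa [RR_single, basisElem, rr, ll] using this

theorem psi_two2 (t : List (Fin n)) (b : Bool) (i j : Fin n) (h : i < j) (ht : t.SortedLT) :
    psi K t b (basisElem K n (.two i j h 2)) = if t = [i, j] ∧ b = true then 1 else 0 := by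
  have := psi_word (K := K) t [i] j b true ht (by simp [List.sortedLT_iff_pairwise, h])
  simpa [RR_single, basisElem, rr, ll] using this

theorem psi_seq (t : List (Fin n)) (b b' : Bool) (k hk) (f : Fin k → Fin n) (hf)
    (ht : t.SortedLT) :
    psi K t b (basisElem K n (.seq k hk f hf b')) = if t = List.ofFn f ∧ b = b' then 1 else 0 := by
  cases k with
  | zero => omega
  | succ k =>
    have e := List.ofFn_succ' f
    rw [List.concat_eq_append] at e
    rw [basisElem_seq, psi_word _ _ _ _ _ ht, e]
    rw [← e]; exact List.sortedLT_ofFn_iff.2 hf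

theorem phi_apply (p q : Fin n) (x : Ualg K n) : phi p q x = cof K (phiHom p q x) := rfl

theorem phi_rr (p q : Fin n) (i : Fin n) : phiHom p q (rr K i) = aM K (stdBasis K n i q) * dv K :=
  phiHom_r _ _ _
theorem phi_ll (p q : Fin n) (i : Fin n) : phiHom p q (ll K i) = aM K (stdBasis K n i p) * du K :=
  phiHom_l _ _ _

theorem phi_one (p q : Fin n) : phi p q (basisElem K n .one) = 0 := by
  rw [phi_apply]; simp [basisElem, cof_one]

theorem phi_gen (p q i : Fin n) (b : Bool) : phi p q (basisElem K n (.gen i b)) = 0 := by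
  cases b
  · change cof K (phiHom p q (ll K i)) = 0
    rw [phi_ll, cof_aM, cof_u, mul_zero]
  · change cof K (phiHom p q (rr K i)) = 0
    rw [phi_rr, cof_aM, cof_v, mul_zero]

theorem phi_rl' (p q i j : Fin n) : phi p q (rr K i * ll K j) = if p = j ∧ q = i then 1 else 0 := by
  rw [phi_apply, map_mul, phi_rr, phi_ll]
  have : aM K (stdBasis K n i q) * dv K * (aM K (stdBasis K n j p) * du K) =
    aM K (stdBasis K n i q) * (aM K (stdBasis K n j p) * (du K * dv K)) := by ring
  rw [this, cof_aM, cof_aM, cof_uv]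
  simp only [stdBasis, Pi.single_apply]
  split_ifs <;> simp_all

theorem phi_lr' (p q i j : Fin n) : phi p q (ll K i * rr K j) = if p = i ∧ q = j then 1 else 0 := by
  rw [← phi_rl' (K := K), phi_apply, phi_apply, map_mul (phiHom p q), map_mul (phiHom p q)]
  exact congrArg (cof K) (mul_comm (G := DualNumber (DualNumber K)) _ _)

theorem phi_rr' (p q i j : Fin n) : phi p q (rr K i * rr K j) = 0 := by
  rw [phi_apply, map_mul, phi_rr, phi_rr]
  have : aM K (stdBasis K n i q) * dv K * (aM K (stdBasis K n j q) * dv K) = 0 := by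
    linear_combination aM K (stdBasis K n i q) * aM K (stdBasis K n j q) * dv_dv (K := K)
  rw [this, map_zero]

theorem phi_seq (p q : Fin n) (k hk) (f : Fin k → Fin n) (hf) (b : Bool) :
    phi p q (basisElem K n (.seq k hk f hf b)) = 0 := by
  obtain ⟨k, rfl⟩ : ∃ m, k = m + 2 + 1 := ⟨k - 3, by omega⟩
  rw [basisElem_seq, List.ofFn_succ, List.ofFn_succ, RR_cons, RR_cons, phi_apply, map_mul (phiHom p q), map_mul (phiHom p q),
    map_mul (phiHom p q), phi_rr, phi_rr]
  have key : ∀ c d y z : DualNumber (DualNumber K), cof K (c * dv K * (d * dv K * y) * z) = 0 := by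
    intro c d y z
    have : c * dv K * (d * dv K * y) * z = 0 := by
      linear_combination c * d * y * z * dv_dv (K := K)
    rw [this, map_zero]
  exact key _ _ _ _

def dualF (K : Type) [Field K] {n : ℕ} : BIdx n → (Ualg K n →ₗ[K] K)
  | .one => psi K [] false
  | .gen i b => psi K [i] b
  | .rl i => phi i i
  | .two i j _ t => if t = 0 then phi i j else if t = 1 then phi j i else
      psi K [i, j] true + phi i j
  | .seq _ _ f _ b => psi K (List.ofFn f) b

theorem phi_rl (p q i : Fin n) : phi p q (basisElem K n (.rl i)) = if p = i ∧ q = i then 1 else 0 :=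
  phi_rl' p q i i
theorem phi_two0 (p q i j : Fin n) (h) :
    phi p q (basisElem K n (.two i j h 0)) = if p = i ∧ q = j then 1 else 0 :=
  phi_lr' p q i j
theorem phi_two1 (p q i j : Fin n) (h) :
    phi p q (basisElem K n (.two i j h 1)) = if p = j ∧ q = i then 1 else 0 :=
  phi_rl' p q i j
theorem phi_two2 (p q i j : Fin n) (h) :
    phi p q (basisElem K n (.two i j h 2)) = 0 :=
  phi_rr' p q i j

theorem seq_ne (k : ℕ) (hk : 3 ≤ k) (f : Fin k → Fin n) (l : List (Fin n)) (hl : l.length ≤ 2) :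
    (l = List.ofFn f) = False ∧ (List.ofFn f = l) = False := by
  constructor <;> apply eq_false <;> intro h <;> have := congrArg List.length h <;>
    simp at this <;> omega

theorem s0 : ([] : List (Fin n)).SortedLT := by simp [List.sortedLT_iff_pairwise]
theorem s1 (i : Fin n) : [i].SortedLT := by simp [List.sortedLT_iff_pairwise]
theorem s2 (i j : Fin n) (h : i < j) : [i, j].SortedLT := by simp [List.sortedLT_iff_pairwise, h]


open Classical in
theorem dual_phi (p q : Fin n) (y : BIdx n) (x : BIdx n)
    (hx : x = .rl p ∧ p = q ∨ (∃ h, x = .two p q h 0) ∨ (∃ h, x = .two q p h 1)) :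
    phi p q (basisElem K n y) = if x = y then 1 else 0 := by
  match y with
  | .one => rw [phi_one, if_neg]; rintro rfl; simp at hx
  | .gen i b => rw [phi_gen, if_neg]; rintro rfl; simp at hx
  | .rl i =>
    rw [phi_rl]; congr 1; apply propext
    constructor
    · rintro ⟨rfl, rfl⟩; simpa using hx
    · rintro rfl; simp at hx; grind
  | .two i j h 0 =>
    rw [phi_two0]; congr 1; apply propext
    constructor
    · rintro ⟨rfl, rfl⟩
      rcases hx with ⟨_, rfl⟩ | ⟨_, rfl⟩ | ⟨h', rfl⟩
      · exact absurd h (lt_irrefl _)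
      · rfl
      · exact absurd h (lt_asymm h')
    · rintro rfl; simp at hx; grind
  | .two i j h 1 =>
    rw [phi_two1]; congr 1; apply propext
    constructor
    · rintro ⟨rfl, rfl⟩
      rcases hx with ⟨_, rfl⟩ | ⟨h', rfl⟩ | ⟨h', rfl⟩
      · exact absurd h (lt_irrefl _)
      · exact absurd h (lt_asymm h')
      · rfl
    · rintro rfl; simp at hx; grind
  | .two i j h 2 => rw [phi_two2, if_neg]; rintro rfl; simp at hx
  | .seq k hk f hf b => rw [phi_seq, if_neg]; rintro rfl; simp at hx

open Classical in
theorem dual_spec (x y : BIdx n) : dualF K x (basisElem K n y) = if x = y then 1 else 0 := by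
  match x with
  | .rl i => exact dual_phi i i y _ (Or.inl ⟨rfl, rfl⟩)
  | .two i j h 0 => exact dual_phi i j y _ (Or.inr (Or.inl ⟨h, rfl⟩))
  | .two i j h 1 => exact dual_phi j i y _ (Or.inr (Or.inr ⟨h, rfl⟩))
  | .one =>
    change psi K [] false _ = _
    match y with
    | .one => simp [psi_one, s0]
    | .gen i b => simp [psi_gen, s0]
    | .rl i => simp [psi_rl]
    | .two i j h 0 => simp [psi_two0, s0]
    | .two i j h 1 => simp [psi_two1, s0]
    | .two i j h 2 => simp [psi_two2, s0]
    | .seq k hk f hf b => simp [psi_seq, s0, (seq_ne k hk f [] (by simp)).1]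
  | .gen i' b' =>
    change psi K [i'] b' _ = _
    match y with
    | .one => simp [psi_one, s1]
    | .gen i b => simp [psi_gen, s1]
    | .rl i => simp [psi_rl]
    | .two i j h 0 => simp [psi_two0, s1]
    | .two i j h 1 => simp [psi_two1, s1]
    | .two i j h 2 => simp [psi_two2, s1]
    | .seq k hk f hf b => simp [psi_seq, s1, (seq_ne k hk f [i'] (by simp)).1]
  | .two i' j' h' 2 =>
    change psi K [i', j'] true _ + phi i' j' _ = _
    have hs := s2 i' j' h'
    match y with
    | .one => simp [psi_one, hs, phi_one]
    | .gen i b => simp [psi_gen, hs, phi_gen]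
    | .rl i =>
      simp [psi_rl, phi_rl]
      rintro rfl rfl; exact absurd h' (lt_irrefl _)
    | .two i j h 0 =>
      simp [psi_two0, hs, phi_two0]
      split_ifs <;> simp
    | .two i j h 1 =>
      simp [psi_two1, hs, phi_two1]
      rintro rfl rfl; exact absurd h (lt_asymm h')
    | .two i j h 2 => simp [psi_two2, hs, phi_two2]
    | .seq k hk f hf b => simp [psi_seq, hs, phi_seq, (seq_ne k hk f [i', j'] (by simp)).1]
  | .seq k' hk' f' hf' b' =>
    change psi K (List.ofFn f') b' _ = _
    have hs : (List.ofFn f').SortedLT := List.sortedLT_ofFn_iff.2 hf'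
    match y with
    | .one => rw [psi_one _ _ hs]; simp only [(seq_ne k' hk' f' [] (by simp)).2]; simp
    | .gen i b => rw [psi_gen _ _ _ _ hs]; simp only [(seq_ne k' hk' f' [i] (by simp)).2]; simp
    | .rl i => simp [psi_rl]
    | .two i j h 0 => simp [psi_two0, hs, (seq_ne k' hk' f' [i, j] (by simp)).2]
    | .two i j h 1 => simp [psi_two1, hs, (seq_ne k' hk' f' [i, j] (by simp)).2]
    | .two i j h 2 => simp [psi_two2, hs, (seq_ne k' hk' f' [i, j] (by simp)).2]
    | .seq k hk f hf b =>
      rw [psi_seq _ _ _ _ _ _ _ hs]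
      congr 1; apply propext
      rw [List.ofFn_inj']
      constructor
      · rintro ⟨h, rfl⟩
        cases h; rfl
      · intro h
        cases h
        exact ⟨rfl, rfl⟩

theorem indep : LinearIndependent K (basisElem K n) := by
  classical
  rw [linearIndependent_iff']
  intro s g hg x hx
  have := congrArg (dualF K x) hg
  rw [map_sum, map_zero] at this
  simpa [dual_spec, hx] using this

end helpers

/-- For `K` a field, the images in `U(K^n)` of the monomials
`1`; `l_i`, `r_i`; `r_i·l_i`; `l_i·r_j`, `r_i·l_j`, `r_i·r_j` for `i < j`; and
`r_{i_1}⋯r_{i_{k-1}}·r_{i_k}`, `r_{i_1}⋯r_{i_{k-1}}·l_{i_k}` for `k ≥ 3` and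
`i_1 < ⋯ < i_k`, form a `K`-vector-space basis of `U(K^n)`. -/
theorem basis_Ualg (K : Type) [Field K] (n : ℕ) :
    LinearIndependent K (basisElem K n) ∧
      Submodule.span K (Set.range (basisElem K n)) = ⊤ :=
  ⟨indep, WW_top⟩

end
end

section
/- Let K be a field and n ≥ 0. Then the universal enveloping algebra U(K^n) is finite dimensional over K, with dim_K U(K^n) = 2·2^n + (n² + n − 2)/2. -/
/-!
Universal enveloping algebra of the abelian alternative algebra `K^n`.

`T = Tens_K(K^n ⊕ K^n)`; `l_a` (resp. `r_a`) is the image of `(a,0)` (resp. `(0,a)`).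
`U(K^n)` is the quotient of `T` by the two-sided ideal generated by
`l_a·l_a`, `r_a·r_a`, `l_b·l_a + r_a·r_b`, `r_b·l_a − l_a·r_b − r_a·r_b`.
-/

noncomputable section

section helpers
variable (K : Type) [CommRing K] (n : ℕ)

/-- The exterior algebra of `K^n`. -/
abbrev EA : Type := ExteriorAlgebra K (Fin n → K)

/-- The generators of the exterior algebra. -/
abbrev ei : (Fin n → K) →ₗ[K] EA K n := ExteriorAlgebra.ι K

variable {K n} in
theorem EA_ind {P : EA K n → Prop} (h1 : ∀ r : K, P (algebraMap K _ r))
    (ha : ∀ x y, P x → P y → P (x + y)) (hm : ∀ x m, P x → P (ei K n m * x)) : ∀ x, P x :=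
  fun x =>
  CliffordAlgebra.left_induction (Q := 0) (P := P) h1 ha hm x

/-- Degree-zero part. -/
def ec : EA K n →ₗ[K] K := (ExteriorAlgebra.algebraMapInv (R := K) (M := Fin n → K)).toLinearMap

/-- Degree-one part. -/
def e1 : EA K n →ₗ[K] (Fin n → K) :=
  (TrivSqZeroExt.sndHom K (Fin n → K)).comp ExteriorAlgebra.toTrivSqZeroExt.toLinearMap

theorem e1_ei (a : Fin n → K) : e1 K n (ei K n a) = a := by simp [e1]

theorem ec_alg (r : K) : ec K n (algebraMap K _ r) = r := by simp [ec]

theorem ec_mul (a : Fin n → K) (w : EA K n) : ec K n (ei K n a * w) = 0 := by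
  simp [ec, ExteriorAlgebra.algebraMapInv, ei]

theorem e1_alg (r : K) : e1 K n (algebraMap K _ r) = 0 := by
  simp [e1, TrivSqZeroExt.algebraMap_eq_inl]

theorem e1_mul (a : Fin n → K) (w : EA K n) : e1 K n (ei K n a * w) = ec K n w • a := by
  induction w using EA_ind with
  | h1 r =>
    rw [ec_alg, ← Algebra.commutes, ← Algebra.smul_def, map_smul]
    congr 1
    exact e1_ei K n a
  | ha x y hx hy => rw [mul_add, map_add, hx, hy, map_add, add_smul]
  | hm x m hx =>
    rw [ec_mul, zero_smul]
    simp [e1, ei]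

/-- Positive-degree part. -/
def ep : EA K n →ₗ[K] EA K n :=
  LinearMap.id - (Algebra.linearMap K (EA K n)) ∘ₗ ec K n

theorem ep_apply (w : EA K n) : ep K n w = w - algebraMap K _ (ec K n w) := rfl

theorem ep_alg (r : K) : ep K n (algebraMap K _ r) = 0 := by simp [ep_apply, ec_alg]

theorem ep_mul (a : Fin n → K) (w : EA K n) : ep K n (ei K n a * w) = ei K n a * w := by
  simp [ep_apply, ec_mul]

theorem ec_ep (w : EA K n) : ec K n (ep K n w) = 0 := by
  simp [ep_apply, ec_alg]

/-- The symmetric component. -/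
abbrev Sy : Type := Sym2 (Fin n) → K

/-- The bilinear map `β`. -/
def be : (Fin n → K) →ₗ[K] (Fin n → K) →ₗ[K] Sy K n :=
  LinearMap.mk₂ K (fun a b z => a z.sup * b z.inf)
    (by intros; ext; simp [add_mul]) (by intros; ext; simp [mul_assoc])
    (by intros; ext; simp [mul_add]) (by intros; ext; simp [mul_left_comm])

theorem be_apply (a b : Fin n → K) (z : Sym2 (Fin n)) : be K n a b z = a z.sup * b z.inf := rfl

/-- The model module. -/
abbrev WM : Type := EA K n × EA K n × Sy K n

/-- Action of `l_a`. -/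
def lW : (Fin n → K) →ₗ[K] Module.End K (WM K n) :=
  LinearMap.mk₂ K (fun a w => (ei K n a * ep K n w.2.1, ei K n a * w.1, be K n a (e1 K n w.1)))
    (by intros; simp [add_mul]) (by intros; simp)
    (by intros; simp [mul_add]) (by intros; simp)

/-- Action of `r_a`. -/
def rW : (Fin n → K) →ₗ[K] Module.End K (WM K n) :=
  LinearMap.mk₂ K (fun a w => (ei K n a * w.1 - ei K n a * ep K n w.2.1,
      - (ei K n a * ep K n w.2.1), be K n (e1 K n w.2.1) a))
    (by intros; refine Prod.ext ?_ (Prod.ext ?_ ?_) <;> simp [add_mul] <;> abel)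
    (by intros; simp [smul_sub])
    (by intros; refine Prod.ext ?_ (Prod.ext ?_ ?_) <;> simp [mul_add] <;> abel) (by intros; simp [smul_sub])

theorem lW_apply (a : Fin n → K) (w : WM K n) : lW K n a w =
    (ei K n a * ep K n w.2.1, ei K n a * w.1, be K n a (e1 K n w.1)) := rfl

theorem rW_apply (a : Fin n → K) (w : WM K n) : rW K n a w =
    (ei K n a * w.1 - ei K n a * ep K n w.2.1,
      - (ei K n a * ep K n w.2.1), be K n (e1 K n w.2.1) a) := rfl

theorem ei_sq (a : Fin n → K) (w : EA K n) : ei K n a * (ei K n a * w) = 0 := by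
  rw [← mul_assoc, ExteriorAlgebra.ι_sq_zero, zero_mul]

theorem ei_swap (a b : Fin n → K) (w : EA K n) :
    ei K n a * (ei K n b * w) = - (ei K n b * (ei K n a * w)) := by
  rw [eq_neg_iff_add_eq_zero, ← mul_assoc, ← mul_assoc, ← add_mul,
    ExteriorAlgebra.ι_add_mul_swap, zero_mul]

theorem lW_lW (a b : Fin n → K) (w : WM K n) : lW K n a (lW K n b w) =
    (ei K n a * (ei K n b * w.1), ei K n a * (ei K n b * ep K n w.2.1), 0) := by
  simp only [lW_apply, ep_mul, e1_mul, ec_ep, zero_smul, map_zero]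

theorem rW_rW (a b : Fin n → K) (w : WM K n) : rW K n a (rW K n b w) =
    (ei K n a * (ei K n b * w.1), ei K n a * (ei K n b * ep K n w.2.1), 0) := by
  simp only [rW_apply, ep_mul, e1_mul, ec_ep, zero_smul, map_zero, map_neg, mul_sub, mul_neg,
    neg_neg, neg_zero, LinearMap.zero_apply, sub_neg_eq_add, sub_add_cancel]

theorem lW_rW (a b : Fin n → K) (w : WM K n) : lW K n a (rW K n b w) =
    (- (ei K n a * (ei K n b * ep K n w.2.1)),
      ei K n a * (ei K n b * w.1) - ei K n a * (ei K n b * ep K n w.2.1),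
      ec K n w.1 • be K n a b) := by
  simp only [rW_apply, lW_apply, ep_mul, e1_mul, ec_ep, zero_smul, map_neg, mul_sub, mul_neg,
    map_sub, sub_zero, map_smul]

theorem rW_lW (a b : Fin n → K) (w : WM K n) : rW K n b (lW K n a w) =
    (ei K n b * (ei K n a * ep K n w.2.1) - ei K n b * (ei K n a * w.1),
      - (ei K n b * (ei K n a * w.1)),
      ec K n w.1 • be K n a b) := by
  simp only [rW_apply, lW_apply, ep_mul, e1_mul, map_smul, LinearMap.smul_apply]

/-- The representation of the tensor algebra. -/
def repT : TensorAlgebra K ((Fin n → K) × (Fin n → K)) →ₐ[K] Module.End K (WM K n) :=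
  TensorAlgebra.lift K ((lW K n).coprod (rW K n))

theorem repT_l (a : Fin n → K) : repT K n (lT K n a) = lW K n a := by simp [repT, lT]
theorem repT_r (a : Fin n → K) : repT K n (rT K n a) = rW K n a := by simp [repT, rT]

/-- The representation of `U`. -/
def repU : Ualg K n →ₐ[K] Module.End K (WM K n) :=
  RingQuot.liftAlgHom K ⟨repT K n, by
    intro x y h
    induction h with
    | ll a =>
      rw [map_mul, repT_l, map_zero]
      refine LinearMap.ext fun w => ?_
      rw [Module.End.mul_apply, lW_lW, ei_sq, ei_sq]; rfl
    | rr a =>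
      rw [map_mul, repT_r, map_zero]
      refine LinearMap.ext fun w => ?_
      rw [Module.End.mul_apply, rW_rW, ei_sq, ei_sq]; rfl
    | llrr a b =>
      rw [map_add, map_mul, map_mul, repT_r, repT_l, repT_r, repT_l, map_zero]
      refine LinearMap.ext fun w => ?_
      rw [LinearMap.add_apply, Module.End.mul_apply, Module.End.mul_apply, lW_lW, rW_rW,
        ei_swap K n b a, ei_swap K n b a]
      simp
    | rl a b =>
      rw [map_sub, map_sub, map_mul, map_mul, map_mul, repT_r, repT_l, repT_r, map_zero]
      refine LinearMap.ext fun w => ?_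
      rw [LinearMap.sub_apply, LinearMap.sub_apply, Module.End.mul_apply, Module.End.mul_apply,
        Module.End.mul_apply, rW_lW, rW_rW, lW_rW, ei_swap K n b a, ei_swap K n b a]
      simp only [Prod.mk_sub_mk, LinearMap.zero_apply]
      refine Prod.ext ?_ (Prod.ext ?_ ?_)
      · simp
      · simp
      · simp⟩

theorem repU_mk (x) : repU K n (RingQuot.mkAlgHom K (URel K n) x) = repT K n x :=
  RingQuot.liftAlgHom_mkAlgHom_apply _ _ _ _

theorem repU_l (a : Fin n → K) : repU K n (lU K n a) = lW K n a := by
  rw [lU, repU_mk, repT_l]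
theorem repU_r (a : Fin n → K) : repU K n (rU K n a) = rW K n a := by
  rw [rU, repU_mk, repT_r]

/-- Linear version of `lU`. -/
def lL : (Fin n → K) →ₗ[K] Ualg K n :=
  ((RingQuot.mkAlgHom K (URel K n)).toLinearMap ∘ₗ TensorAlgebra.ι K) ∘ₗ LinearMap.inl K _ _
/-- Linear version of `rU`. -/
def rL : (Fin n → K) →ₗ[K] Ualg K n :=
  ((RingQuot.mkAlgHom K (URel K n)).toLinearMap ∘ₗ TensorAlgebra.ι K) ∘ₗ LinearMap.inr K _ _

theorem lL_eq (a) : lL K n a = lU K n a := rfl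
theorem rL_eq (a) : rL K n a = rU K n a := rfl

/-- Quotient map. -/
def mkU : TensorAlgebra K ((Fin n → K) × (Fin n → K)) →ₐ[K] Ualg K n :=
  RingQuot.mkAlgHom K (URel K n)

theorem mkU_l (a) : mkU K n (lT K n a) = lL K n a := rfl
theorem mkU_r (a) : mkU K n (rT K n a) = rL K n a := rfl

theorem mkU_rel {x y} (h : URel K n x y) : mkU K n x = mkU K n y :=
  RingQuot.mkAlgHom_rel K h

theorem l_sq (a) : lL K n a * lL K n a = 0 := by
  have := mkU_rel K n (URel.ll a)
  rwa [map_mul, mkU_l, map_zero] at this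
theorem r_sq (a) : rL K n a * rL K n a = 0 := by
  have := mkU_rel K n (URel.rr a)
  rwa [map_mul, mkU_r, map_zero] at this

theorem r_swap (a b) : rL K n a * rL K n b = - (rL K n b * rL K n a) := by
  have := r_sq K n (a + b)
  rw [map_add, add_mul, mul_add, mul_add, r_sq, r_sq] at this
  rw [eq_neg_iff_add_eq_zero]
  simpa using this
theorem l_swap (a b) : lL K n a * lL K n b = - (lL K n b * lL K n a) := by
  have := l_sq K n (a + b)
  rw [map_add, add_mul, mul_add, mul_add, l_sq, l_sq] at this
  rw [eq_neg_iff_add_eq_zero]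
  simpa using this

theorem ll_rr_s3 (a b) : lL K n a * lL K n b = rL K n a * rL K n b := by
  have := mkU_rel K n (URel.llrr b a)
  rw [map_add, map_mul, map_mul, mkU_r, mkU_r, mkU_l, mkU_l, map_zero] at this
  rw [r_swap, eq_neg_iff_add_eq_zero, this]

theorem r_l (a b) : rL K n b * lL K n a = lL K n a * rL K n b + rL K n a * rL K n b := by
  have := mkU_rel K n (URel.rl a b)
  rw [map_sub, map_sub, map_mul, map_mul, map_mul, mkU_r, mkU_l, mkU_r, map_zero] at this
  rw [← sub_eq_zero, ← this]; abel

theorem U_ind {P : Ualg K n → Prop} (h1 : ∀ r : K, P (algebraMap K _ r))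
    (hl : ∀ a, P (lL K n a)) (hr : ∀ a, P (rL K n a))
    (ha : ∀ x y, P x → P y → P (x + y)) (hm : ∀ x y, P x → P y → P (x * y)) : ∀ x, P x := by
  intro x
  obtain ⟨t, rfl⟩ : ∃ t, mkU K n t = x := RingQuot.mkAlgHom_surjective K (URel K n) x
  induction t using TensorAlgebra.induction with
  | algebraMap r => rw [AlgHom.commutes]; exact h1 r
  | ι v =>
    have : TensorAlgebra.ι K v = lT K n v.1 + rT K n v.2 := by
      rw [lT, rT, ← map_add]; simp
    rw [this, map_add, mkU_l, mkU_r]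
    exact ha _ _ (hl _) (hr _)
  | mul x y hx hy => rw [map_mul]; exact hm _ _ hx hy
  | add x y hx hy => rw [map_add]; exact ha _ _ hx hy

/-- `X : Λ → U`. -/
def XU : EA K n →ₐ[K] Ualg K n := ExteriorAlgebra.lift K ⟨rL K n, r_sq K n⟩

theorem XU_ei (a) : XU K n (ei K n a) = rL K n a := ExteriorAlgebra.lift_ι_apply _ _ _ _

/-- basis vector -/
abbrev bv (i : Fin n) : Fin n → K := Pi.single i 1

/-- `σ : S → U`. -/
def sg : Sy K n →ₗ[K] Ualg K n :=
  ∑ p : Fin n × Fin n, (LinearMap.proj s(p.1, p.2) : Sy K n →ₗ[K] K).smulRight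
    (lL K n (bv K n p.1) * rL K n (bv K n p.2))

theorem sg_apply (s : Sy K n) : sg K n s = ∑ p : Fin n × Fin n, s s(p.1, p.2) •
    (lL K n (bv K n p.1) * rL K n (bv K n p.2)) := by
  simp [sg]

theorem sum_anti {A : Type} [AddCommGroup A] (F : Fin n → Fin n → A) (h0 : ∀ i, F i i = 0)
    (h : ∀ i j, F i j + F j i = 0) : ∑ p : Fin n × Fin n, F p.1 p.2 = 0 := by
  refine Finset.sum_involution (fun p _ => (p.2, p.1)) ?_ ?_ ?_ ?_
  · intro p _; exact h _ _
  · intro p _ hp hh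
    apply hp
    have : p.2 = p.1 := congrArg Prod.fst hh
    rw [this, h0]
  · intros; simp
  · intros; simp

theorem llr (a b c) : lL K n a * (lL K n b * rL K n c) = rL K n a * (rL K n b * rL K n c) := by
  rw [← mul_assoc, ll_rr_s3, mul_assoc]

theorem lrr (a b c) : lL K n a * (rL K n b * rL K n c) = lL K n a * (lL K n b * lL K n c) := by
  rw [ll_rr_s3]

theorem l_sg (a) (s : Sy K n) : lL K n a * sg K n s = 0 := by
  rw [sg_apply, Finset.mul_sum]
  refine sum_anti n (fun i j => lL K n a * (s s(i, j) • (lL K n (bv K n i) * rL K n (bv K n j))))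
    ?_ ?_
  · intro i
    simp only [mul_smul_comm, llr, r_sq, mul_zero, smul_zero]
  · intro i j
    simp only [mul_smul_comm, llr, Sym2.eq_swap (a := j) (b := i)]
    rw [r_swap K n (bv K n i), mul_neg, smul_neg, neg_add_cancel]

theorem rlr (a b c) : rL K n a * (lL K n b * rL K n c) =
    lL K n b * (lL K n a * lL K n c) + rL K n b * (rL K n a * rL K n c) := by
  rw [← mul_assoc, r_l, add_mul, mul_assoc, mul_assoc, ll_rr_s3]

theorem rlr_swap (a b c) : rL K n a * (lL K n b * rL K n c) + rL K n a * (lL K n c * rL K n b)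
    = 0 := by
  have h1 : ∀ x y z, lL K n x * (lL K n y * lL K n z) = - (lL K n z * (lL K n y * lL K n x)) := by
    intro x y z
    rw [← mul_assoc, l_swap, neg_mul, mul_assoc, l_swap K n x, mul_neg, neg_neg, ← mul_assoc,
      l_swap K n y, neg_mul, mul_assoc]
  have h2 : ∀ x y z, rL K n x * (rL K n y * rL K n z) = - (rL K n z * (rL K n y * rL K n x)) := by
    intro x y z
    rw [← mul_assoc, r_swap, neg_mul, mul_assoc, r_swap K n x, mul_neg, neg_neg, ← mul_assoc,
      r_swap K n y, neg_mul, mul_assoc]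
  rw [rlr, rlr, h1 c a b, h2 c a b]
  abel

theorem rlr_self (a b) : rL K n a * (lL K n b * rL K n b) = 0 := by
  rw [rlr, l_swap K n a, r_swap K n a, mul_neg, mul_neg, ← mul_assoc, ← mul_assoc, l_sq, r_sq]
  simp

theorem r_sg (a) (s : Sy K n) : rL K n a * sg K n s = 0 := by
  rw [sg_apply, Finset.mul_sum]
  refine sum_anti n (fun i j => rL K n a * (s s(i, j) • (lL K n (bv K n i) * rL K n (bv K n j))))
    ?_ ?_
  · intro i
    simp only [mul_smul_comm, rlr_self, smul_zero]
  · intro i j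
    simp only [mul_smul_comm, Sym2.eq_swap (a := j) (b := i)]
    rw [← smul_add, rlr_swap, smul_zero]

theorem sg_be (m : Fin n → K) : sg K n (be K n m m) = lL K n m * rL K n m := by
  have hm : m = ∑ i, m i • bv K n i := by
    ext j; simp [bv, Pi.single_apply]
  have hsym : ∀ i j, be K n m m s(i, j) = m i * m j := by
    intro i j
    rw [be_apply, Sym2.sup_mk, Sym2.inf_mk]
    rcases le_total i j with h | h
    · rw [sup_eq_right.2 h, inf_eq_left.2 h, mul_comm]
    · rw [sup_eq_left.2 h, inf_eq_right.2 h]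
  rw [sg_apply]
  simp only [hsym]
  conv_rhs => rw [hm, map_sum, map_sum, Finset.sum_mul_sum]
  rw [Fintype.sum_prod_type]
  refine Finset.sum_congr rfl fun i _ => Finset.sum_congr rfl fun j _ => ?_
  rw [map_smul, map_smul, smul_mul_smul_comm]

theorem sg_be_swap (a b : Fin n → K) : sg K n (be K n a b) + sg K n (be K n b a) =
    lL K n a * rL K n b + lL K n b * rL K n a := by
  have := sg_be K n (a + b)
  simp only [map_add, LinearMap.add_apply, add_mul, mul_add, sg_be] at this
  rw [← sub_eq_zero] at this ⊢
  rw [← this]; abel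

theorem lrX (m : Fin n → K) (x : EA K n) :
    lL K n m * (rL K n m * XU K n x) = ec K n x • sg K n (be K n m m) := by
  induction x using EA_ind with
  | h1 r =>
    rw [ec_alg, AlgHom.commutes, ← Algebra.commutes, ← Algebra.smul_def, mul_smul_comm, sg_be]
  | ha x y hx hy => rw [map_add, mul_add, mul_add, hx, hy, map_add, add_smul]
  | hm x b hx =>
    rw [ec_mul, zero_smul, map_mul, XU_ei, ← mul_assoc (rL K n m), ← ll_rr_s3, mul_assoc,
      ← mul_assoc, l_sq, zero_mul]

theorem lrX_swap (a b : Fin n → K) (x : EA K n) :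
    lL K n a * (rL K n b * XU K n x) + lL K n b * (rL K n a * XU K n x) =
    ec K n x • (sg K n (be K n a b) + sg K n (be K n b a)) := by
  have := lrX K n (a + b) x
  simp only [map_add, LinearMap.add_apply, add_mul, mul_add, lrX, smul_add] at this
  rw [← sub_eq_zero] at this ⊢
  rw [← this, smul_add]; abel

/-- Recursion step of `Y`. -/
def YF : (Fin n → K) →ₗ[K] EA K n × Ualg K n →ₗ[K] Ualg K n :=
  LinearMap.mk₂ K (fun a w => lL K n a * XU K n w.1 - sg K n (be K n a (e1 K n w.1)))
    (by intros; simp [add_mul]; abel) (by intros; simp [smul_sub])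
    (by intros; simp [mul_add]; abel) (by intros; simp [smul_sub])

theorem YF_apply (a w) : YF K n a w = lL K n a * XU K n w.1 - sg K n (be K n a (e1 K n w.1)) := rfl

/-- `Y : Λ → U`. -/
def YU : EA K n →ₗ[K] Ualg K n :=
  CliffordAlgebra.foldr' _ (YF K n) (by
    intro m x fx
    have : YF K n m (ei K n m * x, YF K n m (x, fx)) = 0 := by
      rw [YF_apply, map_mul, XU_ei, e1_mul, lrX]
      simp
    simpa using this) 0

theorem YU_alg (r : K) : YU K n (algebraMap K _ r) = 0 :=
  (CliffordAlgebra.foldr'_algebraMap _ _ _ _ _).trans (smul_zero _)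

theorem YU_mul (a) (w : EA K n) : YU K n (ei K n a * w) =
    lL K n a * XU K n w - sg K n (be K n a (e1 K n w)) :=
  CliffordAlgebra.foldr'_ι_mul _ _ _ _ _ _

theorem l_YU (a) (q : EA K n) : lL K n a * YU K n q = rL K n a * XU K n (ep K n q) := by
  induction q using EA_ind with
  | h1 r => rw [YU_alg, ep_alg, map_zero, mul_zero, mul_zero]
  | ha x y hx hy => rw [map_add, mul_add, hx, hy, map_add, map_add, mul_add]
  | hm w b _ =>
    rw [YU_mul, ep_mul, mul_sub, l_sg, sub_zero, map_mul, XU_ei, ← mul_assoc, ll_rr_s3, mul_assoc]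

theorem r_YU (a) (q : EA K n) : rL K n a * YU K n q =
    - (rL K n a * XU K n (ep K n q)) - YU K n (ei K n a * ep K n q)
      + sg K n (be K n (e1 K n q) a) := by
  induction q using EA_ind with
  | h1 r => simp [YU_alg, ep_alg, e1_alg]
  | ha x y hx hy =>
    simp only [map_add, mul_add, hx, hy, LinearMap.add_apply]; abel
  | hm w b _ =>
    have h := lrX_swap K n a b w
    rw [YU_mul, ep_mul, mul_sub, r_sg, sub_zero, map_mul, XU_ei, ← mul_assoc, r_l, YU_mul,
      map_mul, XU_ei, e1_mul, r_swap K n b a, add_mul]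
    simp only [map_smul, LinearMap.smul_apply, mul_assoc, neg_mul]
    rw [smul_add] at h
    rw [← sub_eq_zero] at h ⊢
    rw [← h]; abel

/-- The inverse map. -/
def gU : WM K n →ₗ[K] Ualg K n :=
  (XU K n).toLinearMap.coprod ((YU K n).coprod (sg K n))

theorem gU_apply (w) : gU K n w = XU K n w.1 + (YU K n w.2.1 + sg K n w.2.2) := rfl

theorem gU_l (a w) : gU K n (lW K n a w) = lL K n a * gU K n w := by
  rw [gU_apply, gU_apply, lW_apply]
  simp only [map_mul, XU_ei, YU_mul, mul_add, l_YU, l_sg]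
  abel

theorem gU_r (a w) : gU K n (rW K n a w) = rL K n a * gU K n w := by
  rw [gU_apply, gU_apply, rW_apply]
  simp only [map_mul, map_sub, map_neg, XU_ei, mul_add, r_YU, r_sg]
  abel

theorem gU_rep (u : Ualg K n) : ∀ w, gU K n (repU K n u w) = u * gU K n w := by
  induction u using U_ind with
  | h1 r => intro w; rw [AlgHom.commutes, Module.algebraMap_end_apply, map_smul, Algebra.smul_def]
  | hl a => intro w; rw [lL_eq, repU_l, gU_l, lL_eq]
  | hr a => intro w; rw [rL_eq, repU_r, gU_r, rL_eq]
  | ha x y hx hy => intro w; rw [map_add, LinearMap.add_apply, map_add, hx, hy, add_mul]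
  | hm x y hx hy => intro w; rw [map_mul, Module.End.mul_apply, hx, hy, mul_assoc]

/-- Evaluation at the generator. -/
def fU : Ualg K n →ₗ[K] WM K n where
  toFun u := repU K n u (1, 0, 0)
  map_add' := by intros; simp
  map_smul' := by intros; simp

theorem fU_apply (u) : fU K n u = repU K n u (1, 0, 0) := rfl

theorem gU_fU (u) : gU K n (fU K n u) = u := by
  rw [fU_apply, gU_rep, gU_apply]; simp

theorem fU_inj : Function.Injective (fU K n) :=
  Function.LeftInverse.injective (gU_fU K n)

/-- The functional cutting out the range. -/
def q0 : WM K n →ₗ[K] K := ec K n ∘ₗ LinearMap.fst K _ _ ∘ₗ LinearMap.snd K _ _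

theorem q0_apply (w) : q0 K n w = ec K n w.2.1 := rfl

theorem fU_l (a u) : fU K n (lL K n a * u) = lW K n a (fU K n u) := by
  rw [fU_apply, map_mul, lL_eq, repU_l]; rfl
theorem fU_r (a u) : fU K n (rL K n a * u) = rW K n a (fU K n u) := by
  rw [fU_apply, map_mul, rL_eq, repU_r]; rfl

theorem q0_rep (u : Ualg K n) : ∀ w, q0 K n w = 0 → q0 K n (repU K n u w) = 0 := by
  induction u using U_ind with
  | h1 r => intro w h; rw [AlgHom.commutes, Module.algebraMap_end_apply, map_smul, h, smul_zero]
  | hl a => intro w h; rw [lL_eq, repU_l, q0_apply, lW_apply]; exact ec_mul _ _ _ _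
  | hr a =>
    intro w h; rw [rL_eq, repU_r, q0_apply, rW_apply]
    simp only [map_neg, ec_mul, neg_zero]
  | ha x y hx hy => intro w h; rw [map_add, LinearMap.add_apply, map_add, hx w h, hy w h, add_zero]
  | hm x y hx hy => intro w h; rw [map_mul, Module.End.mul_apply]; exact hx _ (hy _ h)

theorem range_l (a w) (h : w ∈ (fU K n).range) : lW K n a w ∈ (fU K n).range := by
  obtain ⟨u, rfl⟩ := h
  exact ⟨_, fU_l K n a u⟩
theorem range_r (a w) (h : w ∈ (fU K n).range) : rW K n a w ∈ (fU K n).range := by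
  obtain ⟨u, rfl⟩ := h
  exact ⟨_, fU_r K n a u⟩

theorem range_p (p : EA K n) : ((p, 0, 0) : WM K n) ∈ (fU K n).range := by
  induction p using EA_ind with
  | h1 r =>
    refine ⟨algebraMap K _ r, ?_⟩
    rw [fU_apply, AlgHom.commutes, Module.algebraMap_end_apply]
    simp [Algebra.algebraMap_eq_smul_one]
  | ha x y hx hy => simpa using add_mem hx hy
  | hm x a hx => simpa [rW_apply] using range_r K n a _ hx

theorem range_ap (a) (p : EA K n) :
    ((0, ei K n a * p, be K n a (e1 K n p)) : WM K n) ∈ (fU K n).range := by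
  simpa [lW_apply] using range_l K n a _ (range_p K n p)

theorem range_ab (a b : Fin n → K) :
    ((0, ei K n a * ei K n b, be K n a b) : WM K n) ∈ (fU K n).range := by
  have h : e1 K n (ei K n b) = b := e1_ei K n b
  simpa [h] using range_ap K n a (ei K n b)

theorem be_bv (i j : Fin n) (h : i ≤ j) : be K n (bv K n j) (bv K n i) = Pi.single s(i, j) 1 := by
  ext z
  induction z using Sym2.ind with
  | _ x y =>
  rw [be_apply, Sym2.sup_mk, Sym2.inf_mk]
  simp only [bv, Pi.single_apply, Sym2.eq_iff]
  rw [ite_zero_mul_ite_zero, mul_one]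
  congr 1
  rw [eq_iff_iff]
  rcases le_total x y with hh | hh
  · rw [sup_eq_right.2 hh, inf_eq_left.2 hh]
    grind
  · rw [sup_eq_left.2 hh, inf_eq_right.2 hh]
    grind

theorem be_bv_lt (i j : Fin n) (h : i < j) : be K n (bv K n i) (bv K n j) = 0 := by
  ext z
  induction z using Sym2.ind with
  | _ x y =>
  rw [be_apply, Sym2.sup_mk, Sym2.inf_mk]
  simp only [bv, Pi.single_apply]
  rw [ite_zero_mul_ite_zero, if_neg]
  · rfl
  rintro ⟨h1, h2⟩
  have : x ⊓ y ≤ x ⊔ y := inf_le_sup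
  grind

theorem range_single (z : Sym2 (Fin n)) :
    ((0, 0, Pi.single z 1) : WM K n) ∈ (fU K n).range := by
  have key : ∀ i j : Fin n, i ≤ j →
      ((0, 0, Pi.single s(i, j) 1) : WM K n) ∈ (fU K n).range := by
    intro i j h
    have h1 := range_ab K n (bv K n j) (bv K n i)
    rw [be_bv K n i j h] at h1
    rcases h.eq_or_lt with rfl | h
    · rwa [ExteriorAlgebra.ι_sq_zero] at h1
    · have h2 := range_ab K n (bv K n i) (bv K n j)
      rw [be_bv_lt K n i j h] at h2
      have h3 := add_mem h1 h2
      simpa [ExteriorAlgebra.ι_add_mul_swap] using h3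
  induction z using Sym2.ind with
  | _ x y =>
  rcases le_total x y with hh | hh
  · exact key _ _ hh
  · rw [Sym2.eq_swap]; exact key _ _ hh

theorem range_s (s : Sy K n) : ((0, 0, s) : WM K n) ∈ (fU K n).range := by
  have hs : ((0, 0, s) : WM K n) = ∑ z, s z • ((0, 0, Pi.single z 1) : WM K n) := by
    refine Prod.ext ?_ (Prod.ext ?_ ?_)
    · simp [Prod.fst_sum]
    · simp [Prod.fst_sum, Prod.snd_sum]
    · ext z; simp [Prod.snd_sum, Finset.sum_apply, Pi.single_apply]
  rw [hs]
  exact sum_mem fun z _ => Submodule.smul_mem _ _ (range_single K n z)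

theorem range_q (q : EA K n) : ((0, ep K n q, 0) : WM K n) ∈ (fU K n).range := by
  induction q using EA_ind with
  | h1 r => rw [ep_alg]; exact zero_mem _
  | ha x y hx hy => simpa using add_mem hx hy
  | hm x a hx =>
    rw [ep_mul]
    simpa using sub_mem (range_ap K n a x) (range_s K n (be K n a (e1 K n x)))

theorem range_eq : (fU K n).range = (q0 K n).ker := by
  apply le_antisymm
  · rintro _ ⟨u, rfl⟩
    exact q0_rep K n u _ (by simp [q0_apply])
  · rintro ⟨p, q, s⟩ h
    have h : ec K n q = 0 := h
    have hq : ep K n q = q := by rw [ep_apply, h]; simp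
    have := add_mem (range_p K n p) (add_mem (range_q K n q) (range_s K n s))
    simpa [hq] using this

end helpers

/-- For `K` a field, `U(K^n)` is finite dimensional of dimension `2·2^n + (n²+n−2)/2`. -/
theorem dim_Ualg (K : Type) [Field K] (n : ℕ) :
    FiniteDimensional K (Ualg K n) ∧
      (Module.finrank K (Ualg K n) : ℤ) = 2 * 2 ^ n + ((n : ℤ) ^ 2 + n - 2) / 2 := by
  classical
  let B := (Pi.basisFun K (Fin n)).ExteriorAlgebra
  have : Module.Finite K (EA K n) := Module.Finite.of_basis B
  have hE : Module.finrank K (EA K n) = 2 ^ n := by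
    rw [Module.finrank_eq_card_basis B]; simp
  have hfin : FiniteDimensional K (Ualg K n) := FiniteDimensional.of_injective _ (fU_inj K n)
  refine ⟨hfin, ?_⟩
  have h1 := LinearMap.finrank_range_of_inj (fU_inj K n)
  have h2 := LinearMap.finrank_range_add_finrank_ker (q0 K n)
  have hs : (q0 K n).range = ⊤ := by
    rw [LinearMap.range_eq_top]
    intro r
    exact ⟨(0, algebraMap K _ r, 0), ec_alg K n r⟩
  rw [← range_eq, h1, hs, finrank_top, Module.finrank_self, Module.finrank_prod,
    Module.finrank_prod, hE, Module.finrank_fintype_fun_eq_card, Sym2.card, Fintype.card_fin] at h2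
  have h3 : ((n + 1).choose 2 : ℤ) * 2 = (n : ℤ) ^ 2 + n := by
    have := Nat.triangle_succ n
    have h4 : (n + 1).choose 2 * 2 = (n + 1) * n := by
      have := Finset.sum_range_id_mul_two (n + 1)
      rw [Finset.sum_range_id, ] at this
      simpa [Nat.choose_two_right] using this
    have : ((n + 1).choose 2 : ℤ) * 2 = (n + 1) * n := by exact_mod_cast h4
    rw [this]; ring
  have h5 : (1 : ℤ) + Module.finrank K (Ualg K n) = 2 ^ n + (2 ^ n + (n + 1).choose 2) := by
    exact_mod_cast h2
  generalize (n : ℤ) ^ 2 + n = X at *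
  generalize (2 : ℤ) ^ n = Y at *
  omega

end
end

section
/- Let K be a nontrivial commutative ring and n ≥ 1. Write e_1, …, e_n for the standard basis of K^n and r_i = r_{e_i}. Then the image in U(K^n) of the product r_1·r_2·⋯·r_n is nonzero. -/
/-!
Universal enveloping algebra of the abelian alternative algebra `K^n`.

`T = Tens_K(K^n ⊕ K^n)`; `l_a` (resp. `r_a`) is the image of `(a,0)` (resp. `(0,a)`).
`U(K^n)` is the quotient of `T` by the two-sided ideal generated by
`l_a·l_a`, `r_a·r_a`, `l_b·l_a + r_a·r_b`, `r_b·l_a − l_a·r_b − r_a·r_b`.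
-/

noncomputable section

/-- image of `r` in the matrix model -/
def rM (A : Type) [Ring A] (x : A) : Matrix (Fin 2) (Fin 2) A := !![0, x; x, 0]

/-- image of `l` in the matrix model -/
def lM (A : Type) [Ring A] (x : A) : Matrix (Fin 2) (Fin 2) A := !![-x, -x; 0, x]

/-- linear map to the matrix model -/
def modelLin (K : Type) [CommRing K] (n : ℕ) : ((Fin n → K) × (Fin n → K)) →ₗ[K]
    Matrix (Fin 2) (Fin 2) (ExteriorAlgebra K (Fin n → K)) where
  toFun p := lM _ (ExteriorAlgebra.ι K p.1) + rM _ (ExteriorAlgebra.ι K p.2)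
  map_add' p q := by
    ext i j
    fin_cases i <;> fin_cases j <;> simp [lM, rM] <;> abel
  map_smul' c p := by
    ext i j
    fin_cases i <;> fin_cases j <;> simp [lM, rM]

theorem modelLin_l (K : Type) [CommRing K] (n : ℕ) (a : Fin n → K) :
    modelLin K n (a, 0) = lM _ (ExteriorAlgebra.ι K a) := by
  ext i j
  fin_cases i <;> fin_cases j <;> simp [modelLin, lM, rM]

theorem modelLin_r (K : Type) [CommRing K] (n : ℕ) (a : Fin n → K) :
    modelLin K n (0, a) = rM _ (ExteriorAlgebra.ι K a) := by
  ext i j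
  fin_cases i <;> fin_cases j <;> simp [modelLin, lM, rM]

theorem ext_anti (K : Type) [CommRing K] (n : ℕ) (a b : Fin n → K) :
    ExteriorAlgebra.ι K b * ExteriorAlgebra.ι K a
      = -(ExteriorAlgebra.ι K a * ExteriorAlgebra.ι K b) :=
  eq_neg_of_add_eq_zero_left (ExteriorAlgebra.ι_add_mul_swap b a)

theorem model_rel (K : Type) [CommRing K] (n : ℕ)
    ⦃x y : TensorAlgebra K ((Fin n → K) × (Fin n → K))⦄ (h : URel K n x y) :
    TensorAlgebra.lift K (modelLin K n) x = TensorAlgebra.lift K (modelLin K n) y := by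
  cases h with
  | ll a =>
    simp only [lT, rT, map_mul, map_zero, TensorAlgebra.lift_ι_apply, modelLin_l]
    ext i j
    fin_cases i <;> fin_cases j <;> simp [lM, Matrix.mul_apply, Fin.sum_univ_two]
  | rr a =>
    simp only [lT, rT, map_mul, map_zero, TensorAlgebra.lift_ι_apply, modelLin_r]
    ext i j
    fin_cases i <;> fin_cases j <;> simp [rM, Matrix.mul_apply, Fin.sum_univ_two]
  | llrr a b =>
    simp only [lT, rT, map_mul, map_add, map_zero, TensorAlgebra.lift_ι_apply, modelLin_r,
      modelLin_l]
    ext i j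
    fin_cases i <;> fin_cases j <;>
      simp [lM, rM, Matrix.mul_apply, Fin.sum_univ_two, ext_anti K n a b]
  | rl a b =>
    simp only [lT, rT, map_mul, map_sub, map_zero, TensorAlgebra.lift_ι_apply, modelLin_r,
      modelLin_l]
    ext i j
    fin_cases i <;> fin_cases j <;>
      simp [lM, rM, Matrix.mul_apply, Fin.sum_univ_two, ext_anti K n a b]

theorem prod_rM (A : Type) [Ring A] (L : List A) :
    (L.map (rM A)).prod = !![L.prod, 0; 0, L.prod] ∨
    (L.map (rM A)).prod = !![0, L.prod; L.prod, 0] := by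
  induction L with
  | nil => left; simp [Matrix.one_fin_two]
  | cons x L ih =>
    rcases ih with h | h
    · right; simp [h, rM]
    · left; simp [h, rM]

theorem ext_prod_ne (K : Type) [CommRing K] [Nontrivial K] (n : ℕ) :
    (List.ofFn fun i : Fin n => ExteriorAlgebra.ι K (stdBasis K n i)).prod ≠ 0 := by
  intro h
  rw [← ExteriorAlgebra.ιMulti_apply] at h
  have h2 := congrArg (ExteriorAlgebra.liftAlternating (R := K) (M := Fin n → K) (N := K)
    (Pi.single n (Matrix.detRowAlternating (n := Fin n) (R := K)))) h
  rw [ExteriorAlgebra.liftAlternating_apply_ιMulti, map_zero, Pi.single_eq_same] at h2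
  have h3 : Matrix.det (1 : Matrix (Fin n) (Fin n) K) = 0 := by
    rw [← h2]
    change _ = Matrix.det _
    congr 1
    ext i j
    simp [stdBasis, Matrix.one_apply, Pi.single_apply, eq_comm]
  simp at h3

/-- For `K` nontrivial and `n ≥ 1`, the product `r_1 r_2 ⋯ r_n` of the images of the
standard basis vectors is nonzero in `U(K^n)`. -/
theorem prod_r_ne_zero (K : Type) [CommRing K] [Nontrivial K] (n : ℕ) (hn : 1 ≤ n) :
    (List.ofFn fun i : Fin n => rU K n (stdBasis K n i)).prod ≠ 0 := by
  intro h
  let F : Ualg K n →ₐ[K] Matrix (Fin 2) (Fin 2) (ExteriorAlgebra K (Fin n → K)) :=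
    RingQuot.liftAlgHom K ⟨TensorAlgebra.lift K (modelLin K n), model_rel K n⟩
  have hF : ∀ a, F (rU K n a) = rM _ (ExteriorAlgebra.ι K a) := by
    intro a
    rw [← modelLin_r]
    refine (RingQuot.liftAlgHom_mkAlgHom_apply K _ _ _).trans ?_
    exact TensorAlgebra.lift_ι_apply _ _
  have h1 := congrArg F h
  rw [map_list_prod, map_zero, List.map_ofFn] at h1
  have h2 : (List.ofFn (F ∘ fun i : Fin n => rU K n (stdBasis K n i))) =
      (List.ofFn fun i : Fin n => ExteriorAlgebra.ι K (stdBasis K n i)).map (rM _) := by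
    rw [List.map_ofFn]
    congr 1
    funext i
    exact hF _
  rw [h2] at h1
  apply ext_prod_ne K n
  rcases prod_rM _ (List.ofFn fun i : Fin n => ExteriorAlgebra.ι K (stdBasis K n i)) with h3 | h3
  · rw [h3] at h1
    exact congrFun (congrFun h1 0) 0
  · rw [h3] at h1
    exact congrFun (congrFun h1 0) 1

end
end
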